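/- Let (X, σ_X) and (Y, σ_Y) be one-sided subshifts over finite alphabets, with Y a factor of X via a one-block factor map π : X → Y. Let Φ = (log φ_n)_{n=1}^∞ ∈ C_sa(X, σ_X) be generated by a sub-multiplicative φ : L(X) → [0,∞), and let ν ∈ M(Y, σ_Y). Then the set I_ν(Φ) of conditional equilibrium states of Φ with respect to ν is a non-empty compact convex subset of M(X, σ_X); and if ν is ergodic, then each extreme point of I_ν(Φ) is an ergodic measure on X. -/

import Mathlib

open MeasureTheory Filter Topology
open scoped Classical ENNReal NNReal

noncomputable section

/-- The left shift on one-sided sequences. -/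
def shiftMap {A : Type} : (ℕ → A) → (ℕ → A) := fun x n => x (n + 1)

/-- The cylinder set of a finite word. -/
def cyl {A : Type} (I : List A) : Set (ℕ → A) :=
  {x | ∀ i : Fin I.length, x i = I.get i}

/-- Membership of a word in the language of `X`. -/
def Lang {A : Type} (X : Set (ℕ → A)) (I : List A) : Prop :=
  (cyl I ∩ X).Nonempty

/-- `X` is a (nonempty) one-sided subshift. -/
def IsSubshift {A : Type} [TopologicalSpace A] (X : Set (ℕ → A)) : Prop :=
  X.Nonempty ∧ IsCompact X ∧ shiftMap '' X ⊆ X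

/-- weak `p`-specification -/
def WeakSpecification {A : Type} (X : Set (ℕ → A)) (p : ℕ) : Prop :=
  ∀ I J : List A, Lang X I → Lang X J →
    ∃ K : List A, K.length ≤ p ∧ Lang X (I ++ K ++ J)

/-- `p`-specification -/
def Specification {A : Type} (X : Set (ℕ → A)) (p : ℕ) : Prop :=
  ∀ I J : List A, Lang X I → Lang X J →
    ∃ K : List A, K.length = p ∧ Lang X (I ++ K ++ J)

/-- invariant probability measures supported on `X` (predicate on plain measures) -/
def InvOn {A : Type} [MeasurableSpace A] (X : Set (ℕ → A)) (μ : Measure (ℕ → A)) : Prop :=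
  IsProbabilityMeasure μ ∧ μ.map shiftMap = μ ∧ μ X = 1

/-- the set of shift-invariant probability measures on `X` -/
def MInv {A : Type} [MeasurableSpace A] (X : Set (ℕ → A)) :
    Set (ProbabilityMeasure (ℕ → A)) :=
  {μ | (μ : Measure (ℕ → A)).map shiftMap = (μ : Measure (ℕ → A)) ∧
    (μ : Measure (ℕ → A)) X = 1}

/-- measure of a word: `μ([I] ∩ X)` -/
def mw {A : Type} [MeasurableSpace A] (X : Set (ℕ → A)) (μ : Measure (ℕ → A))
    (I : List A) : ℝ :=
  (μ (cyl I ∩ X)).toReal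

/-- the initial word of length `n` of a sequence -/
def wordOf {A : Type} (x : ℕ → A) (n : ℕ) : List A := List.ofFn (fun i : Fin n => x i)

/-- `n`-block entropy -/
def Hblock {A : Type} [Fintype A] [MeasurableSpace A] (X : Set (ℕ → A))
    (μ : Measure (ℕ → A)) (n : ℕ) : ℝ :=
  -∑ w : Fin n → A, mw X μ (List.ofFn w) * Real.log (mw X μ (List.ofFn w))

/-- measure-theoretic entropy (the limit exists for invariant measures; `liminf` realizes it) -/
def ent {A : Type} [Fintype A] [MeasurableSpace A] (X : Set (ℕ → A))
    (μ : Measure (ℕ → A)) : ℝ :=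
  liminf (fun n : ℕ => Hblock X μ n / n) atTop

/-- extended logarithm: `log t`, with value `⊥` for `t ≤ 0` -/
def elog (t : ℝ) : EReal := if t ≤ 0 then ⊥ else ((Real.log t : ℝ) : EReal)

/-- the integral `∫ log g dμ`, valued in `ℝ ∪ {−∞}` -/
def intlog {Ω : Type*} [MeasurableSpace Ω] (μ : Measure Ω) (g : Ω → ℝ) : EReal :=
  ((∫⁻ x, ENNReal.ofReal (Real.log (g x)) ∂μ : ℝ≥0∞) : EReal) -
    ((∫⁻ x, (if g x ≤ 0 then (⊤ : ℝ≥0∞) else ENNReal.ofReal (-Real.log (g x))) ∂μ : ℝ≥0∞) : EReal)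

/-- sub-additive potential `Φ = (log φ_n)_{n ≥ 1}` -/
def SubaddPot {A : Type} [TopologicalSpace A] (X : Set (ℕ → A))
    (φ : ℕ → (ℕ → A) → ℝ) : Prop :=
  (∀ n, 1 ≤ n → ContinuousOn (φ n) X) ∧
  (∀ n, 1 ≤ n → ∀ x ∈ X, 0 ≤ φ n x) ∧
  ∃ c > (0:ℝ), ∀ n m : ℕ, 1 ≤ n → 1 ≤ m → ∀ x ∈ X,
    φ (n + m) x ≤ c * φ n x * φ m (shiftMap^[n] x)

/-- `Φ_*(μ) = lim (1/n) ∫ log φ_n dμ` (realized as a `liminf` in `EReal`) -/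
def PhiStar {A : Type} [MeasurableSpace A] (μ : Measure (ℕ → A))
    (φ : ℕ → (ℕ → A) → ℝ) : EReal :=
  liminf (fun n : ℕ => (((n : ℝ)⁻¹ : ℝ) : EReal) * intlog μ (φ n)) atTop

/-- sub-multiplicative function on the language of `X` -/
def Submult {A : Type} (X : Set (ℕ → A)) (φ : List A → ℝ) : Prop :=
  (∀ I, Lang X I → 0 ≤ φ I) ∧ φ [] = 1 ∧
  ∃ c > (0:ℝ), ∀ I J : List A, Lang X (I ++ J) → φ (I ++ J) ≤ c⁻¹ * φ I * φ J

/-- the potential generated by a word function -/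
def genPot {A : Type} (φ : List A → ℝ) : ℕ → (ℕ → A) → ℝ := fun n x => φ (wordOf x n)

/-- the scaled potential `cΦ = (log φ_n^c)` -/
def scPot {Ω : Type*} (c : ℝ) (φ : ℕ → Ω → ℝ) : ℕ → Ω → ℝ := fun n x => φ n x ^ c

/-- the "pressure value" `Φ_*(μ) + h_μ` -/
def eqVal {A : Type} [Fintype A] [MeasurableSpace A] (X : Set (ℕ → A))
    (φ : ℕ → (ℕ → A) → ℝ) (μ : ProbabilityMeasure (ℕ → A)) : EReal :=
  PhiStar (μ : Measure (ℕ → A)) φ + ((ent X (μ : Measure (ℕ → A)) : ℝ) : EReal)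

/-- the set of equilibrium states of `Φ` -/
def EqSet {A : Type} [Fintype A] [MeasurableSpace A] (X : Set (ℕ → A))
    (φ : ℕ → (ℕ → A) → ℝ) : Set (ProbabilityMeasure (ℕ → A)) :=
  {μ | μ ∈ MInv X ∧ eqVal X φ μ = ⨆ η ∈ MInv X, eqVal X φ η}

/-- sequence map induced by a one-block map -/
def blockMap {A B : Type} (π : A → B) : (ℕ → A) → (ℕ → B) := fun x n => π (x n)

/-- pushforward of a probability measure under a one-block map -/
def pushM {A B : Type} [MeasurableSpace A] [MeasurableSpace B] (π : A → B)
    (μ : ProbabilityMeasure (ℕ → A)) : Measure (ℕ → B) :=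
  (μ : Measure (ℕ → A)).map (blockMap π)

/-- conditional equilibrium states of `Φ` over `ν` -/
def CondEqSet {A B : Type} [Fintype A] [MeasurableSpace A] [MeasurableSpace B]
    (X : Set (ℕ → A)) (π : A → B) (φ : ℕ → (ℕ → A) → ℝ) (ν : Measure (ℕ → B)) :
    Set (ProbabilityMeasure (ℕ → A)) :=
  {μ | μ ∈ MInv X ∧ pushM π μ = ν ∧
    eqVal X φ μ = ⨆ η ∈ {η | η ∈ MInv X ∧ pushM π η = ν}, eqVal X φ η}

/-- the projected word function `ψ(J) = Σ_{I : πI = J} φ(I)` -/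
def psiProj {A B : Type} [Fintype A] (X : Set (ℕ → A)) (π : A → B) (φ : List A → ℝ)
    (J : List B) : ℝ :=
  ∑ w : Fin J.length → A,
    if Lang X (List.ofFn w) ∧ List.map π (List.ofFn w) = J then φ (List.ofFn w) else 0

/-- `φ^{(2)}(J) = (Σ_{I : πI = J} φ(I)^{1/a₁})^{a₁}` -/
def phiTwo {A B : Type} [Fintype A] (X : Set (ℕ → A)) (π : A → B) (φ : List A → ℝ)
    (a₁ : ℝ) (J : List B) : ℝ :=
  (∑ w : Fin J.length → A,
    if Lang X (List.ofFn w) ∧ List.map π (List.ofFn w) = J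
    then φ (List.ofFn w) ^ a₁⁻¹ else 0) ^ a₁

/-- `a`-weighted pressure value for `k = 2` -/
def wVal2 {A B : Type} [Fintype A] [Fintype B] [MeasurableSpace A] [MeasurableSpace B]
    (X : Set (ℕ → A)) (Y : Set (ℕ → B)) (π : A → B) (φ : ℕ → (ℕ → A) → ℝ)
    (a₁ a₂ : ℝ) (μ : ProbabilityMeasure (ℕ → A)) : EReal :=
  PhiStar (μ : Measure (ℕ → A)) φ +
    ((a₁ * ent X (μ : Measure (ℕ → A)) + a₂ * ent Y (pushM π μ) : ℝ) : EReal)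

/-- the set of `a`-weighted equilibrium states, `k = 2` -/
def WEqSet2 {A B : Type} [Fintype A] [Fintype B] [MeasurableSpace A] [MeasurableSpace B]
    (X : Set (ℕ → A)) (Y : Set (ℕ → B)) (π : A → B) (φ : ℕ → (ℕ → A) → ℝ)
    (a₁ a₂ : ℝ) : Set (ProbabilityMeasure (ℕ → A)) :=
  {μ | μ ∈ MInv X ∧ wVal2 X Y π φ a₁ a₂ μ = ⨆ η ∈ MInv X, wVal2 X Y π φ a₁ a₂ η}

/-- convexity of a set of probability measures -/
def ConvexPM {Ω : Type*} [MeasurableSpace Ω] (S : Set (ProbabilityMeasure Ω)) : Prop :=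
  ∀ μ₁ ∈ S, ∀ μ₂ ∈ S, ∀ t : ℝ, 0 ≤ t → t ≤ 1 → ∀ μ : ProbabilityMeasure Ω,
    (μ : Measure Ω) = ENNReal.ofReal t • (μ₁ : Measure Ω) +
      ENNReal.ofReal (1 - t) • (μ₂ : Measure Ω) → μ ∈ S

/-- extreme points of a set of probability measures -/
def IsExtremePM {Ω : Type*} [MeasurableSpace Ω] (S : Set (ProbabilityMeasure Ω))
    (μ : ProbabilityMeasure Ω) : Prop :=
  μ ∈ S ∧ ∀ μ₁ ∈ S, ∀ μ₂ ∈ S, ∀ t : ℝ, 0 < t → t < 1 →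
    (μ : Measure Ω) = ENNReal.ofReal t • (μ₁ : Measure Ω) +
      ENNReal.ofReal (1 - t) • (μ₂ : Measure Ω) → μ₁ = μ₂

/-- the class `Ω_w(A*, p)` -/
def OmegaW {A : Type} [Fintype A] (p : ℕ) (f : List A → ℝ) : Prop :=
  (∀ I, 0 ≤ f I ∧ f I ≤ 1) ∧
  ∃ c > (0:ℝ),
    (∀ n : ℕ, ∑ w : Fin n → A, f (List.ofFn w) = 1) ∧
    (∀ I J : List A, ∃ K : List A, K.length ≤ p ∧ c * (f I * f J) ≤ f (I ++ K ++ J)) ∧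
    (∀ I : List A, ∃ i j : A, c * f I ≤ f (i :: I) ∧ c * f I ≤ f (I ++ [j]))

/-- the class `Ω(A*, p)` -/
def OmegaS {A : Type} [Fintype A] (p : ℕ) (f : List A → ℝ) : Prop :=
  (∀ I, 0 ≤ f I ∧ f I ≤ 1) ∧
  ∃ c > (0:ℝ),
    (∀ n : ℕ, ∑ w : Fin n → A, f (List.ofFn w) = 1) ∧
    (∀ I J : List A, ∃ K : List A, K.length = p ∧ c * (f I * f J) ≤ f (I ++ K ++ J))

/-- `f_{m,n}(I)` -/
def fmn {A : Type} [Fintype A] (f : List A → ℝ) (m n : ℕ) (I : List A) : ℝ :=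
  ∑ u : Fin m → A, ∑ v : Fin n → A, f (List.ofFn u ++ I ++ List.ofFn v)

/-- `f*(I) = sup_{m,n} f_{m,n}(I)` -/
def fstar {A : Type} [Fintype A] (f : List A → ℝ) (I : List A) : ℝ :=
  ⨆ m : ℕ, ⨆ n : ℕ, fmn f m n I

/-- the class `D_w(X, p)` -/
def Dw {A : Type} (X : Set (ℕ → A)) (p : ℕ) (φ : List A → ℝ) : Prop :=
  (∀ I, Lang X I → 0 ≤ φ I) ∧ (∃ I, Lang X I ∧ I ≠ [] ∧ 0 < φ I) ∧
  ∃ c : ℝ, 0 < c ∧ c ≤ 1 ∧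
    (∀ I J : List A, Lang X (I ++ J) → φ (I ++ J) ≤ c⁻¹ * φ I * φ J) ∧
    (∀ I J : List A, Lang X I → Lang X J →
      ∃ K : List A, K.length ≤ p ∧ Lang X (I ++ K ++ J) ∧
        c * (φ I * φ J) ≤ φ (I ++ K ++ J))

/-- the class `D(X, p)` -/
def Ds {A : Type} (X : Set (ℕ → A)) (p : ℕ) (φ : List A → ℝ) : Prop :=
  (∀ I, Lang X I → 0 ≤ φ I) ∧ (∃ I, Lang X I ∧ I ≠ [] ∧ 0 < φ I) ∧
  ∃ c : ℝ, 0 < c ∧ c ≤ 1 ∧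
    (∀ I J : List A, Lang X (I ++ J) → φ (I ++ J) ≤ c⁻¹ * φ I * φ J) ∧
    (∀ I J : List A, Lang X I → Lang X J →
      ∃ K : List A, K.length = p ∧ Lang X (I ++ K ++ J) ∧
        c * (φ I * φ J) ≤ φ (I ++ K ++ J))

end

noncomputable section

/-- iterated one-block maps along a chain of alphabets: `tauFrom π j i : B j → B (j+i)` -/
def tauFrom {B : ℕ → Type} (π : ∀ i, B i → B (i+1)) (j : ℕ) : (i : ℕ) → B j → B (j + i)
  | 0 => id
  | (i+1) => fun a => π (j + i) (tauFrom π j i a)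

/-- weighted pressure value along a chain starting at index `j`, with `k` weights `w 0, …, w (k-1)` -/
def wValGen {B : ℕ → Type} [∀ i, Fintype (B i)] [∀ i, MeasurableSpace (B i)]
    (π : ∀ i, B i → B (i+1)) (X : ∀ i, Set (ℕ → B i)) (j k : ℕ) (w : ℕ → ℝ)
    (φ : ℕ → (ℕ → B j) → ℝ) (μ : ProbabilityMeasure (ℕ → B j)) : EReal :=
  PhiStar (μ : Measure (ℕ → B j)) φ +
    ((∑ i ∈ Finset.range k, w i *
      ent (X (j + i)) ((μ : Measure (ℕ → B j)).map (blockMap (tauFrom π j i))) : ℝ) : EReal)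

/-- weighted equilibrium states along a chain -/
def wEqSetGen {B : ℕ → Type} [∀ i, Fintype (B i)] [∀ i, MeasurableSpace (B i)]
    (π : ∀ i, B i → B (i+1)) (X : ∀ i, Set (ℕ → B i)) (j k : ℕ) (w : ℕ → ℝ)
    (φ : ℕ → (ℕ → B j) → ℝ) : Set (ProbabilityMeasure (ℕ → B j)) :=
  {μ | μ ∈ MInv (X j) ∧
    wValGen π X j k w φ μ = ⨆ η ∈ MInv (X j), wValGen π X j k w φ η}

end

/-!
For an invariant `μ` let `P_n(μ) = ∫ log φ_n dμ + H_n(μ)`, with `H_n` the entropy of the `n`-block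
partition. Each `P_n` is upper semicontinuous, and concavity of the entropy together with
`H_n(tμ₁ + (1 - t)μ₂) ≤ tH_n(μ₁) + (1 - t)H_n(μ₂) + O(1)` makes it affine up to a bounded error.
The sequence `P_n(μ)` is subadditive up to a bounded error, so the pressure `Φ_*(μ) + h_μ` is both
the infimum of upper semicontinuous functions and the limit of `P_n / n`: it is upper
semicontinuous and affine. Its maximisers over the compact convex fibre of invariant measures above
`ν` therefore form a non-empty compact face of that fibre, and an extreme point of a face is extreme
in the fibre. If `ν` is ergodic, an invariant probability measure absolutely continuous with respect
to a member of the fibre projects to `ν`, so the fibre is a face of the simplex of all invariant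
measures and its extreme points are ergodic. The fibre is non-empty: `ν` lifts to `X` by approximate
measurable sections of `π`, and averaging the lift along the shift keeps it above `ν`.
-/

section ExtendedReals

theorem ereal_tendsto_add {ι : Type*} {l : Filter ι} {u v : ι → EReal} {a b : EReal}
    (hu : Tendsto u l (𝓝 a)) (hv : Tendsto v l (𝓝 b)) (h : a ≠ ⊤ ∨ b ≠ ⊥) (h' : a ≠ ⊥ ∨ b ≠ ⊤) :
    Tendsto (fun i => u i + v i) l (𝓝 (a + b)) :=
  (EReal.continuousAt_add (p := (a, b)) h h').tendsto.comp (hu.prodMk_nhds hv)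

theorem ereal_tendsto_of_subadditive_of_eq_bot {v : ℕ → EReal}
    (hsub : ∀ m n, v (m + n) ≤ v m + v n) {k : ℕ} (hk : v k = ⊥) :
    Tendsto (fun n : ℕ => (((n : ℝ)⁻¹ : ℝ) : EReal) * v n) atTop (𝓝 ⊥) := by
  refine tendsto_const_nhds.congr' ?_
  filter_upwards [eventually_ge_atTop k, eventually_gt_atTop 0] with n hkn hn
  have hbot : v n = ⊥ := le_bot_iff.1 <| by simpa [hk, hkn] using hsub k (n - k)
  rw [hbot, EReal.coe_mul_bot_of_pos (by positivity)]

theorem ereal_tendsto_iInf_of_subadditive {v : ℕ → EReal} (htop : ∀ n, v n ≠ ⊤)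
    (hsub : ∀ m n, v (m + n) ≤ v m + v n) :
    Tendsto (fun n : ℕ => (((n : ℝ)⁻¹ : ℝ) : EReal) * v n) atTop
      (𝓝 (⨅ n : ℕ, ((((n + 1 : ℕ) : ℝ)⁻¹ : ℝ) : EReal) * v (n + 1))) := by
  refine tendsto_order.2 ⟨fun a ha => ?_, fun a ha => ?_⟩
  · filter_upwards [eventually_ge_atTop 1] with n hn
    obtain ⟨k, rfl⟩ := Nat.exists_eq_add_of_le' hn
    exact ha.trans_le (iInf_le _ k)
  obtain ⟨k, hk⟩ := iInf_lt_iff.1 ha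
  by_cases hbot : ∃ j, v j = ⊥
  · obtain ⟨j, hj⟩ := hbot
    exact (ereal_tendsto_of_subadditive_of_eq_bot hsub hj).eventually_lt_const (bot_le.trans_lt ha)
  · lift v to ℕ → ℝ using fun n => ⟨htop n, fun h => hbot ⟨n, h⟩⟩
    obtain ⟨r, hkr, hra⟩ := EReal.lt_iff_exists_real_btwn.1 hk
    have hv : Subadditive v := fun m n => by simpa [← EReal.coe_add] using hsub m n
    have hkr' : v (k + 1) / (k + 1 : ℕ) < r := by
      rw [div_eq_inv_mul, ← EReal.coe_lt_coe_iff, EReal.coe_mul]; exact hkr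
    filter_upwards [hv.eventually_div_lt_of_div_lt k.succ_ne_zero hkr'] with n hn
    rw [← EReal.coe_mul, ← div_eq_inv_mul]
    exact (EReal.coe_lt_coe_iff.2 hn).trans hra

theorem ereal_tendsto_inv_mul_coe (C : ℝ) :
    Tendsto (fun n : ℕ => (((n : ℝ)⁻¹ : ℝ) : EReal) * (C : EReal)) atTop (𝓝 0) := by
  have h : Tendsto (fun n : ℕ => (n : ℝ)⁻¹ * C) atTop (𝓝 0) := by
    simpa using tendsto_inv_atTop_nhds_zero_nat.mul_const C
  simpa only [Function.comp_def, EReal.coe_mul, EReal.coe_zero] using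
    (continuous_coe_real_ereal.tendsto 0).comp h

theorem ereal_inv_natCast_mul_add (n : ℕ) (x y : EReal) :
    (((n : ℝ)⁻¹ : ℝ) : EReal) * (x + y) =
      (((n : ℝ)⁻¹ : ℝ) : EReal) * x + (((n : ℝ)⁻¹ : ℝ) : EReal) * y :=
  EReal.left_distrib_of_nonneg_of_ne_top (by positivity) (EReal.coe_ne_top _) x y

theorem ereal_tendsto_inv_mul_add_coe {u : ℕ → EReal} {a : EReal} (C : ℝ)
    (hu : Tendsto (fun n : ℕ => (((n : ℝ)⁻¹ : ℝ) : EReal) * u n) atTop (𝓝 a)) :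
    Tendsto (fun n : ℕ => (((n : ℝ)⁻¹ : ℝ) : EReal) * (u n + C)) atTop (𝓝 a) := by
  simpa only [ereal_inv_natCast_mul_add, add_zero] using
    ereal_tendsto_add hu (ereal_tendsto_inv_mul_coe C) (by simp) (by simp)

theorem ereal_mul_ne_top {s : ℝ} (hs : 0 < s) {x : EReal} (hx : x ≠ ⊤) : (s : EReal) * x ≠ ⊤ := by
  induction x <;> simp_all [EReal.coe_mul_bot_of_pos, ← EReal.coe_mul]

theorem ereal_eq_add_of_tendsto_inv_mul {u v w : ℕ → EReal} {a b c : EReal} {s t : ℝ} (C : ℝ)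
    (hs : 0 < s) (ht : 0 < t) (hb : b ≠ ⊤) (hc : c ≠ ⊤)
    (hu : Tendsto (fun n : ℕ => (((n : ℝ)⁻¹ : ℝ) : EReal) * u n) atTop (𝓝 a))
    (hv : Tendsto (fun n : ℕ => (((n : ℝ)⁻¹ : ℝ) : EReal) * v n) atTop (𝓝 b))
    (hw : Tendsto (fun n : ℕ => (((n : ℝ)⁻¹ : ℝ) : EReal) * w n) atTop (𝓝 c))
    (hle : ∀ n, s * v n + t * w n ≤ u n) (hge : ∀ n, u n ≤ s * v n + t * w n + C) :
    a = s * b + t * c := by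
  have hcomb : Tendsto (fun n : ℕ => (((n : ℝ)⁻¹ : ℝ) : EReal) * (s * v n + t * w n)) atTop
      (𝓝 (s * b + t * c)) := by
    simp only [ereal_inv_natCast_mul_add, mul_left_comm _ (s : EReal), mul_left_comm _ (t : EReal)]
    exact ereal_tendsto_add (EReal.Tendsto.const_mul hv (by simp) (by simp))
      (EReal.Tendsto.const_mul hw (by simp) (by simp)) (.inl (ereal_mul_ne_top hs hb))
      (.inr (ereal_mul_ne_top ht hc))
  refine tendsto_nhds_unique hu <| tendsto_of_tendsto_of_tendsto_of_le_of_le hcomb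
    (ereal_tendsto_inv_mul_add_coe C hcomb) (fun n => ?_) (fun n => ?_)
  · exact mul_le_mul_of_nonneg_left (hle n) (by positivity)
  · exact mul_le_mul_of_nonneg_left (hge n) (by positivity)

end ExtendedReals

section ExtendedIntegral

variable {Ω : Type*} [MeasurableSpace Ω]

/-- The integral of an extended-real function, as the difference of the integrals of its positive
and negative parts. It is meaningful when the positive part has finite integral, and then takes
values in `[-∞, ∞)`. -/
noncomputable def eintegral (μ : Measure Ω) (f : Ω → EReal) : EReal :=
  ((∫⁻ x, (f x).toENNReal ∂μ : ℝ≥0∞) : EReal) - ((∫⁻ x, (-f x).toENNReal ∂μ : ℝ≥0∞) : EReal)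

theorem intlog_eq_eintegral {μ : Measure Ω} {g : Ω → ℝ} (hg : ∀ᵐ x ∂μ, 0 ≤ g x) :
    intlog μ g = eintegral μ fun x => ENNReal.log (ENNReal.ofReal (g x)) := by
  have hpos {y : ℝ} (hy : 0 ≤ y) : ENNReal.ofReal (Real.log y) =
      (ENNReal.log (ENNReal.ofReal y)).toENNReal := by
    rw [ENNReal.log_ofReal]
    split_ifs with h
    · simp [le_antisymm h hy]
    · rw [EReal.real_coe_toENNReal]
  have hneg (y : ℝ) : (if y ≤ 0 then ⊤ else ENNReal.ofReal (-Real.log y)) =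
      (-ENNReal.log (ENNReal.ofReal y)).toENNReal := by
    rw [ENNReal.log_ofReal]
    split_ifs
    · simp
    · rw [← EReal.coe_neg, EReal.real_coe_toENNReal]
  unfold intlog eintegral
  rw [lintegral_congr_ae (hg.mono fun x => hpos)]
  simp only [hneg]

variable {μ : Measure Ω} {f g : Ω → EReal}

theorem eintegral_congr_ae (h : f =ᵐ[μ] g) : eintegral μ f = eintegral μ g := by
  have hpos : (fun x => (f x).toENNReal) =ᵐ[μ] fun x => (g x).toENNReal :=
    h.fun_comp EReal.toENNReal
  have hneg : (fun x => (-f x).toENNReal) =ᵐ[μ] fun x => (-g x).toENNReal :=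
    h.fun_comp fun y => (-y).toENNReal
  rw [eintegral, eintegral, lintegral_congr_ae hpos, lintegral_congr_ae hneg]

theorem eintegral_mono_ae (h : f ≤ᵐ[μ] g) : eintegral μ f ≤ eintegral μ g :=
  EReal.sub_le_sub
    (EReal.coe_ennreal_le_coe_ennreal_iff.2 <| lintegral_mono_ae <|
      h.mono fun _ hx => EReal.toENNReal_le_toENNReal hx)
    (EReal.coe_ennreal_le_coe_ennreal_iff.2 <| lintegral_mono_ae <|
      h.mono fun _ hx => EReal.toENNReal_le_toENNReal (EReal.neg_le_neg_iff.2 hx))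

theorem eintegral_ne_top (hf : ∫⁻ x, (f x).toENNReal ∂μ ≠ ⊤) : eintegral μ f ≠ ⊤ := by
  unfold eintegral
  lift ∫⁻ x, (f x).toENNReal ∂μ to ℝ≥0 using hf with p
  cases ∫⁻ x, (-f x).toENNReal ∂μ with
  | top => simp
  | coe q => exact EReal.coe_ne_top (p - q)

theorem lintegral_toENNReal_ne_top [IsFiniteMeasure μ] {C : ℝ} (hf : ∀ x, f x ≤ C) :
    ∫⁻ x, (f x).toENNReal ∂μ ≠ ⊤ := by
  refine ((lintegral_mono fun x => EReal.toENNReal_le_toENNReal (hf x)).trans_lt ?_).ne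
  simpa using ENNReal.mul_lt_top (by simp) (measure_lt_top μ _)

theorem eintegral_comp_of_measurePreserving {Ω' : Type*} [MeasurableSpace Ω'] {ν : Measure Ω'}
    {T : Ω → Ω'} (hT : MeasurePreserving T μ ν) {f : Ω' → EReal} (hf : Measurable f) :
    eintegral μ (fun x => f (T x)) = eintegral ν f := by
  have hpos := hT.lintegral_comp hf.ereal_toENNReal
  have hneg := hT.lintegral_comp (f := fun y => (-f y).toENNReal) hf.neg.ereal_toENNReal
  rw [eintegral, eintegral, hpos, hneg]

theorem coe_ennreal_sub_eq_sub_of_add_eq_add {p q p' q' : ℝ≥0∞} (hp : p ≠ ⊤) (hp' : p' ≠ ⊤)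
    (h : p + q' = p' + q) : (p : EReal) - q = p' - q' := by
  lift p to ℝ≥0 using hp
  lift p' to ℝ≥0 using hp'
  cases q with
  | top =>
    obtain rfl : q' = ⊤ := by simpa using h
    simp
  | coe q =>
    cases q' with
    | top => exact absurd h.symm (by simp)
    | coe q' =>
      have h' : (p : ℝ) + q' = p' + q := by exact_mod_cast h
      exact EReal.coe_eq_coe_iff.2 (by linarith : (p : ℝ) - q = p' - q')

theorem coe_ennreal_add_sub_add {p q p' q' : ℝ≥0∞} (hp : p ≠ ⊤) (hp' : p' ≠ ⊤) :
    ((p + p' : ℝ≥0∞) : EReal) - (q + q' : ℝ≥0∞) = (p - q) + (p' - q') := by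
  lift p to ℝ≥0 using hp
  lift p' to ℝ≥0 using hp'
  cases q with
  | top => simp
  | coe q =>
    cases q' with
    | top => simp
    | coe q' => exact EReal.coe_eq_coe_iff.2 (add_sub_add_comm (p : ℝ) p' q q')

theorem toENNReal_neg_add_add {x y : EReal} (hx : x ≠ ⊤) (hy : y ≠ ⊤) :
    (x + y).toENNReal + ((-x).toENNReal + (-y).toENNReal) =
      (x.toENNReal + y.toENNReal) + (-(x + y)).toENNReal := by
  induction x with
  | top => exact absurd rfl hx
  | bot => simp
  | coe x =>
    induction y with
    | top => exact absurd rfl hy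
    | bot => simp
    | coe y =>
      simp only [← EReal.coe_add, ← EReal.coe_neg, EReal.real_coe_toENNReal, ENNReal.ofReal,
        ← ENNReal.coe_add, ENNReal.coe_inj, ← NNReal.coe_inj, NNReal.coe_add, Real.coe_toNNReal']
      grind

theorem eintegral_add (hf : Measurable f) (hg : Measurable g)
    (hfi : ∫⁻ x, (f x).toENNReal ∂μ ≠ ⊤) (hgi : ∫⁻ x, (g x).toENNReal ∂μ ≠ ⊤) :
    eintegral μ (fun x => f x + g x) = eintegral μ f + eintegral μ g := by
  have hparts : ∀ᵐ x ∂μ, (f x + g x).toENNReal + ((-f x).toENNReal + (-g x).toENNReal) =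
      ((f x).toENNReal + (g x).toENNReal) + (-(f x + g x)).toENNReal := by
    filter_upwards [ae_lt_top hf.ereal_toENNReal hfi, ae_lt_top hg.ereal_toENNReal hgi]
      with x hfx hgx
    exact toENNReal_neg_add_add (EReal.toENNReal_ne_top_iff.1 hfx.ne)
      (EReal.toENNReal_ne_top_iff.1 hgx.ne)
  have hposi : ∫⁻ x, (f x + g x).toENNReal ∂μ ≠ ⊤ := by
    refine ne_top_of_le_ne_top ?_ (lintegral_mono fun x => EReal.toENNReal_add_le)
    rw [lintegral_add_left hf.ereal_toENNReal]
    exact ENNReal.add_ne_top.2 ⟨hfi, hgi⟩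
  unfold eintegral
  rw [← coe_ennreal_add_sub_add hfi hgi]
  refine coe_ennreal_sub_eq_sub_of_add_eq_add hposi (ENNReal.add_ne_top.2 ⟨hfi, hgi⟩) ?_
  have hnegf : Measurable fun x => (-f x).toENNReal := hf.neg.ereal_toENNReal
  have hsum : Measurable fun x => (f x + g x).toENNReal := by fun_prop
  rw [← lintegral_add_left hnegf, ← lintegral_add_left hf.ereal_toENNReal,
    ← lintegral_add_left hsum, ← lintegral_add_left (by fun_prop)]
  exact lintegral_congr_ae hparts

theorem eintegral_add_coe [IsProbabilityMeasure μ] (hf : Measurable f)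
    (hfi : ∫⁻ x, (f x).toENNReal ∂μ ≠ ⊤) (C : ℝ) :
    eintegral μ (fun x => f x + C) = eintegral μ f + C := by
  rw [eintegral_add hf measurable_const hfi (lintegral_toENNReal_ne_top fun _ => le_rfl)]
  congr 1
  simp only [eintegral, lintegral_const, measure_univ, mul_one]
  rcases le_total 0 C with hC | hC
  · rw [EReal.toENNReal_of_nonpos (x := -(C : EReal)) (by simpa using hC),
      EReal.coe_toENNReal (mod_cast hC), EReal.coe_ennreal_zero, sub_zero]
  · rw [EReal.toENNReal_of_nonpos (x := (C : EReal)) (mod_cast hC), EReal.coe_ennreal_zero,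
      EReal.coe_toENNReal (by simpa using hC), zero_sub, neg_neg]

theorem eintegral_add_smul_measure {s t : ℝ} (hs : 0 ≤ s) (ht : 0 ≤ t) {μ₁ μ₂ : Measure Ω}
    (h₁ : ∫⁻ x, (f x).toENNReal ∂μ₁ ≠ ⊤) (h₂ : ∫⁻ x, (f x).toENNReal ∂μ₂ ≠ ⊤) :
    eintegral (ENNReal.ofReal s • μ₁ + ENNReal.ofReal t • μ₂) f =
      s * eintegral μ₁ f + t * eintegral μ₂ f := by
  have hmul {r : ℝ} (hr : 0 ≤ r) (p q : ℝ≥0∞) : (r : EReal) * (p - q) =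
      (ENNReal.ofReal r * p : ℝ≥0∞) - (ENNReal.ofReal r * q : ℝ≥0∞) := by
    rw [EReal.mul_sub_of_nonneg_of_ne_top (by simpa) (by simp)]
    simp [EReal.coe_ennreal_mul, EReal.coe_ennreal_ofReal, hr]
  unfold eintegral
  rw [hmul hs, hmul ht, ← coe_ennreal_add_sub_add (ENNReal.mul_ne_top (by simp) h₁)
    (ENNReal.mul_ne_top (by simp) h₂)]
  simp only [lintegral_add_measure, lintegral_smul_measure, smul_eq_mul]

section Semicontinuity

variable [TopologicalSpace Ω] [OpensMeasurableSpace Ω]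

theorem continuous_lintegral_of_forall_le {u : Ω → ℝ≥0∞} (hu : Continuous u) {C : ℝ≥0}
    (hC : ∀ x, u x ≤ C) :
    Continuous fun μ : ProbabilityMeasure Ω => ∫⁻ x, u x ∂(μ : Measure Ω) := by
  have hu_top (x : Ω) : u x ≠ ⊤ := ne_top_of_le_ne_top ENNReal.coe_ne_top (hC x)
  have hmem (x : Ω) : ((u x).toNNReal : ℝ) ∈ Set.Icc 0 (C : ℝ) :=
    ⟨NNReal.coe_nonneg _, ENNReal.toNNReal_mono ENNReal.coe_ne_top (hC x)⟩
  have hbdd (x y : Ω) : dist (u x).toNNReal (u y).toNNReal ≤ C :=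
    (Real.dist_le_of_mem_Icc (hmem x) (hmem y)).trans_eq (sub_zero _)
  let v := BoundedContinuousFunction.mkOfBound
    ⟨fun x => (u x).toNNReal, ENNReal.continuousOn_toNNReal.comp_continuous hu hu_top⟩ C hbdd
  simpa [v, ENNReal.coe_toNNReal (hu_top _)] using
    ProbabilityMeasure.continuous_lintegral_boundedContinuousFunction v

theorem lowerSemicontinuous_lintegral {u : Ω → ℝ≥0∞} (hu : Continuous u) :
    LowerSemicontinuous fun μ : ProbabilityMeasure Ω => ∫⁻ x, u x ∂(μ : Measure Ω) := by
  have htrunc (μ : ProbabilityMeasure Ω) :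
      ∫⁻ x, u x ∂(μ : Measure Ω) = ⨆ k : ℕ, ∫⁻ x, min (u x) k ∂(μ : Measure Ω) := by
    rw [← lintegral_iSup (fun k => (hu.min continuous_const).measurable)
      fun i j hij x => min_le_min_left _ (Nat.cast_le.2 hij)]
    simp_rw [← inf_iSup_eq, ENNReal.iSup_natCast, inf_top_eq]
  simp_rw [htrunc]
  exact lowerSemicontinuous_iSup fun k => (continuous_lintegral_of_forall_le (C := k)
    (hu.min continuous_const) fun x => by simp).lowerSemicontinuous

theorem upperSemicontinuous_eintegral {f : Ω → EReal} (hf : Continuous f) {C : ℝ}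
    (hC : ∀ x, f x ≤ C) :
    UpperSemicontinuous fun μ : ProbabilityMeasure Ω => eintegral (μ : Measure Ω) f := by
  have hpos : UpperSemicontinuous fun μ : ProbabilityMeasure Ω =>
      ((∫⁻ x, (f x).toENNReal ∂(μ : Measure Ω) : ℝ≥0∞) : EReal) :=
    (continuous_coe_ennreal_ereal.comp <| continuous_lintegral_of_forall_le (C := C.toNNReal)
      hf.ereal_toENNReal fun x => EReal.toENNReal_le_toENNReal (hC x)).upperSemicontinuous
  have hneg : UpperSemicontinuous fun μ : ProbabilityMeasure Ω =>
      -((∫⁻ x, (-f x).toENNReal ∂(μ : Measure Ω) : ℝ≥0∞) : EReal) :=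
    (continuous_neg.comp continuous_coe_ennreal_ereal).comp_lowerSemicontinuous_antitone
      (lowerSemicontinuous_lintegral hf.neg.ereal_toENNReal)
      fun p q h => EReal.neg_le_neg_iff.2 (EReal.coe_ennreal_le_coe_ennreal_iff.2 h)
  simp only [eintegral, sub_eq_add_neg]
  exact hpos.add' hneg fun μ => EReal.continuousAt_add
    (.inl (mt EReal.coe_ennreal_eq_top_iff.1 (lintegral_toENNReal_ne_top hC))) (.inl (by simp))

end Semicontinuity

end ExtendedIntegral

section FiniteEntropy

theorem negMulLog_le_sub_sub_mul_log {p r : ℝ} (hp : 0 ≤ p) (hr : 0 < r) :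
    Real.negMulLog p ≤ r - p - p * Real.log r := by
  have h := mul_le_mul_of_nonneg_left
    (Real.negMulLog_le_one_sub_self (div_nonneg hp hr.le)) hr.le
  calc Real.negMulLog p = r * Real.negMulLog (p / r) + p / r * Real.negMulLog r := by
        rw [← Real.negMulLog_mul, div_mul_cancel₀ p hr.ne']
    _ ≤ r * (1 - p / r) + p / r * Real.negMulLog r := by gcongr
    _ = r - p - p * Real.log r := by rw [Real.negMulLog]; field_simp; ring

theorem negMulLog_add_le {x y : ℝ} (hx : 0 ≤ x) (hy : 0 ≤ y) :
    Real.negMulLog (x + y) ≤ Real.negMulLog x + Real.negMulLog y := by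
  rcases hx.eq_or_lt with rfl | hx
  · simp
  rcases hy.eq_or_lt with rfl | hy
  · simp
  have hlogx := mul_le_mul_of_nonneg_left (Real.log_le_log hx (le_add_of_nonneg_right hy.le)) hx.le
  have hlogy := mul_le_mul_of_nonneg_left (Real.log_le_log hy (le_add_of_nonneg_left hx.le)) hy.le
  simp only [Real.negMulLog]
  linarith

theorem sum_negMulLog_le_add {F G : Type*} [Fintype F] [Fintype G] {p : F → G → ℝ}
    (hp : ∀ a b, 0 ≤ p a b) (hsum : ∑ a, ∑ b, p a b = 1) :
    ∑ a, ∑ b, Real.negMulLog (p a b) ≤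
      ∑ a, Real.negMulLog (∑ b, p a b) + ∑ b, Real.negMulLog (∑ a, p a b) := by
  set q : F → ℝ := fun a => ∑ b, p a b with hq
  set r : G → ℝ := fun b => ∑ a, p a b with hr
  have hpq (a b) : p a b ≤ q a :=
    Finset.single_le_sum (fun b _ => hp a b) (Finset.mem_univ b)
  have hpr (a b) : p a b ≤ r b :=
    Finset.single_le_sum (f := fun a => p a b) (fun a _ => hp a b) (Finset.mem_univ a)
  have hgibbs (a b) : Real.negMulLog (p a b) ≤
      q a * r b - p a b - (p a b * Real.log (q a) + p a b * Real.log (r b)) := by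
    rcases (hp a b).eq_or_lt with h | h
    · simpa [← h] using mul_nonneg ((hp a b).trans (hpq a b)) ((hp a b).trans (hpr a b))
    · have hqa := h.trans_le (hpq a b)
      have hrb := h.trans_le (hpr a b)
      simpa only [Real.log_mul hqa.ne' hrb.ne', mul_add] using
        negMulLog_le_sub_sub_mul_log (hp a b) (mul_pos hqa hrb)
  have hqr : ∑ a, ∑ b, q a * r b = 1 := by
    rw [← Finset.sum_mul_sum, hsum, one_mul, Finset.sum_comm, hsum]
  have hlogq : ∑ a, ∑ b, p a b * Real.log (q a) = -∑ a, Real.negMulLog (q a) := by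
    simp only [← Finset.sum_mul, Real.negMulLog, neg_mul, Finset.sum_neg_distrib, neg_neg, hq]
  have hlogr : ∑ a, ∑ b, p a b * Real.log (r b) = -∑ b, Real.negMulLog (r b) := by
    rw [Finset.sum_comm]
    simp only [← Finset.sum_mul, Real.negMulLog, neg_mul, Finset.sum_neg_distrib, neg_neg, hr]
  calc ∑ a, ∑ b, Real.negMulLog (p a b)
      ≤ ∑ a, ∑ b,
          (q a * r b - p a b - (p a b * Real.log (q a) + p a b * Real.log (r b))) :=
        Finset.sum_le_sum fun a _ => Finset.sum_le_sum fun b _ => hgibbs a b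
    _ = ∑ a, Real.negMulLog (q a) + ∑ b, Real.negMulLog (r b) := by
        simp only [Finset.sum_sub_distrib, Finset.sum_add_distrib, hqr, hlogq, hlogr,
          show ∑ a, ∑ b, p a b = 1 from hsum]
        ring

variable {Ω F G : Type*} [MeasurableSpace Ω] [Fintype F] [Fintype G]

/-- The Shannon entropy of the partition of a probability space into the fibres of a
finite-valued map. -/
noncomputable def finEntropy (μ : Measure Ω) (q : Ω → F) : ℝ :=
  ∑ a, Real.negMulLog (μ.real (q ⁻¹' {a}))

variable {μ : Measure Ω} {q : Ω → F} {r : Ω → G}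

theorem finEntropy_nonneg [IsProbabilityMeasure μ] : 0 ≤ finEntropy μ q :=
  Finset.sum_nonneg fun _ _ => Real.negMulLog_nonneg measureReal_nonneg measureReal_le_one

theorem finEntropy_equiv_comp (e : F ≃ G) : finEntropy μ (fun x => e (q x)) = finEntropy μ q := by
  refine (Fintype.sum_equiv e _ _ fun a => ?_).symm
  congr 2
  ext x
  simp

theorem continuous_finEntropy [TopologicalSpace Ω] [OpensMeasurableSpace Ω] [HasOuterApproxClosed Ω]
    [TopologicalSpace F] [DiscreteTopology F] (hq : Continuous q) :
    Continuous fun μ : ProbabilityMeasure Ω => finEntropy (μ : Measure Ω) q := by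
  refine continuous_finsetSum _ fun a _ => Real.continuous_negMulLog.comp ?_
  refine continuous_iff_continuousAt.2 fun μ => ?_
  exact NNReal.tendsto_coe.2 <| ProbabilityMeasure.tendsto_measure_of_isClopen_of_tendsto
    tendsto_id ((isClopen_discrete {a}).preimage hq)

theorem measureReal_add_smul_measure {s t : ℝ} (hs : 0 ≤ s) (ht : 0 ≤ t) {μ₁ μ₂ : Measure Ω}
    [IsFiniteMeasure μ₁] [IsFiniteMeasure μ₂] (S : Set Ω) :
    (ENNReal.ofReal s • μ₁ + ENNReal.ofReal t • μ₂).real S = s * μ₁.real S + t * μ₂.real S := by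
  have hne (m : Measure Ω) [IsFiniteMeasure m] (c : ℝ) : (ENNReal.ofReal c • m) S ≠ ∞ :=
    ENNReal.mul_ne_top ENNReal.ofReal_ne_top (measure_ne_top m S)
  rw [measureReal_add_apply (hne μ₁ s) (hne μ₂ t), measureReal_ennreal_smul_apply,
    measureReal_ennreal_smul_apply, ENNReal.toReal_ofReal hs, ENNReal.toReal_ofReal ht]

theorem add_finEntropy_le {s t : ℝ} (hs : 0 ≤ s) (ht : 0 ≤ t) (hst : s + t = 1)
    (μ₁ μ₂ : Measure Ω) [IsFiniteMeasure μ₁] [IsFiniteMeasure μ₂] (q : Ω → F) :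
    s * finEntropy μ₁ q + t * finEntropy μ₂ q ≤
      finEntropy (ENNReal.ofReal s • μ₁ + ENNReal.ofReal t • μ₂) q := by
  simp only [finEntropy, Finset.mul_sum, ← Finset.sum_add_distrib,
    measureReal_add_smul_measure hs ht]
  exact Finset.sum_le_sum fun a _ => Real.concaveOn_negMulLog.2 measureReal_nonneg
    measureReal_nonneg hs ht hst

variable [MeasurableSpace F] [MeasurableSingletonClass F]

theorem finEntropy_comp_of_measurePreserving {Ω' : Type*} [MeasurableSpace Ω'] {ν : Measure Ω'}
    {T : Ω → Ω'} (hT : MeasurePreserving T μ ν) {q : Ω' → F} (hq : Measurable q) :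
    finEntropy μ (fun x => q (T x)) = finEntropy ν q := by
  refine Finset.sum_congr rfl fun a _ => congrArg Real.negMulLog ?_
  exact hT.measureReal_preimage (hq (measurableSet_singleton a)).nullMeasurableSet

theorem sum_measureReal_inter_preimage_singleton [IsFiniteMeasure μ] (hq : Measurable q)
    (s : Set Ω) : ∑ a, μ.real (s ∩ q ⁻¹' {a}) = μ.real s := by
  have h := sum_measureReal_preimage_singleton (μ := μ.restrict s) Finset.univ (f := q)
    fun a _ => hq (measurableSet_singleton a)
  simpa [measureReal_restrict_apply, hq (measurableSet_singleton _), Set.inter_comm s] using h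

theorem finEntropy_prodMk_le [MeasurableSpace G] [MeasurableSingletonClass G]
    [IsProbabilityMeasure μ] (hq : Measurable q) (hr : Measurable r) :
    finEntropy μ (fun x => (q x, r x)) ≤ finEntropy μ q + finEntropy μ r := by
  have hfst (a : F) : ∑ b, μ.real (q ⁻¹' {a} ∩ r ⁻¹' {b}) = μ.real (q ⁻¹' {a}) :=
    sum_measureReal_inter_preimage_singleton hr (q ⁻¹' {a})
  have hsnd (b : G) : ∑ a, μ.real (q ⁻¹' {a} ∩ r ⁻¹' {b}) = μ.real (r ⁻¹' {b}) := by
    simpa only [Set.inter_comm] using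
      sum_measureReal_inter_preimage_singleton hq (r ⁻¹' {b})
  have hone : ∑ a, μ.real (q ⁻¹' {a}) = 1 := by
    simpa using sum_measureReal_inter_preimage_singleton (μ := μ) hq Set.univ
  have hjoint (a : F) (b : G) :
      (fun x => (q x, r x)) ⁻¹' {(a, b)} = q ⁻¹' {a} ∩ r ⁻¹' {b} := by
    ext x; simp
  simpa only [finEntropy, Fintype.sum_prod_type, hjoint, hfst, hsnd] using
    sum_negMulLog_le_add (p := fun a b => μ.real (q ⁻¹' {a} ∩ r ⁻¹' {b}))
      (fun _ _ => measureReal_nonneg) (by simp only [hfst, hone])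

theorem finEntropy_le_add {s t : ℝ} (hs : 0 ≤ s) (ht : 0 ≤ t)
    (μ₁ μ₂ : Measure Ω) [IsProbabilityMeasure μ₁] [IsProbabilityMeasure μ₂] (hq : Measurable q) :
    finEntropy (ENNReal.ofReal s • μ₁ + ENNReal.ofReal t • μ₂) q ≤
      s * finEntropy μ₁ q + t * finEntropy μ₂ q + (Real.negMulLog s + Real.negMulLog t) := by
  have hone (m : Measure Ω) [IsProbabilityMeasure m] : ∑ a, m.real (q ⁻¹' {a}) = 1 := by
    simpa using sum_measureReal_inter_preimage_singleton (μ := m) hq Set.univ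
  calc finEntropy (ENNReal.ofReal s • μ₁ + ENNReal.ofReal t • μ₂) q
      ≤ ∑ a, (Real.negMulLog (s * μ₁.real (q ⁻¹' {a})) +
          Real.negMulLog (t * μ₂.real (q ⁻¹' {a}))) := by
        simp only [finEntropy, measureReal_add_smul_measure hs ht]
        exact Finset.sum_le_sum fun a _ => negMulLog_add_le
          (mul_nonneg hs measureReal_nonneg) (mul_nonneg ht measureReal_nonneg)
    _ = s * finEntropy μ₁ q + t * finEntropy μ₂ q + (Real.negMulLog s + Real.negMulLog t) := by
        simp only [finEntropy, Real.negMulLog_mul, Finset.sum_add_distrib, ← Finset.sum_mul,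
          ← Finset.mul_sum, hone, one_mul]
        ring

end FiniteEntropy

section BlockPressure

variable {Ω F : Type*}

/-- The `T`-itinerary of length `n` of a point with respect to a finite-valued observable `q`. -/
def itinerary (T : Ω → Ω) (q : Ω → F) (n : ℕ) (x : Ω) : Fin n → F := fun i => q (T^[i] x)

theorem itinerary_add (T : Ω → Ω) (q : Ω → F) (m n : ℕ) (x : Ω) :
    itinerary T q (m + n) x =
      Fin.appendEquiv m n (itinerary T q m x, itinerary T q n (T^[m] x)) := by
  refine funext fun i => Fin.addCases (fun j => ?_) (fun j => ?_) i
  · simp [itinerary, Fin.appendEquiv]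
  · simp [itinerary, Fin.appendEquiv, add_comm m, Function.iterate_add_apply]

/-- Subadditive sequences of extended real functions over `T`, the subadditivity being required
on `X` only. This is the logarithmic form of a sub-additive potential; the functions are
continuous into `[-∞, ∞)` and bounded above on the whole space. -/
structure IsSubadditiveCocycle [TopologicalSpace Ω] (T : Ω → Ω) (X : Set Ω)
    (h : ℕ → Ω → EReal) : Prop where
  continuous : ∀ n, Continuous (h n)
  bddAbove : ∀ n, ∃ C : ℝ, ∀ x, h n x ≤ C
  le_add : ∀ m n, ∀ x ∈ X, h (m + n) x ≤ h m x + h n (T^[m] x)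

variable [MeasurableSpace Ω] {T : Ω → Ω} {q : Ω → F} {X : Set Ω} {h : ℕ → Ω → EReal}

theorem measurable_itinerary [MeasurableSpace F] (hT : Measurable T) (hq : Measurable q) (n : ℕ) :
    Measurable (itinerary T q n) :=
  measurable_pi_lambda _ fun i => hq.comp (hT.iterate i)

variable [Fintype F]

/-- The value on `n`-blocks `∫ h n dμ + H_μ(q, q ∘ T, …, q ∘ T^[n - 1])`, whose growth rate is the
pressure of `h` at `μ`. -/
noncomputable def blockPressure (T : Ω → Ω) (q : Ω → F) (h : ℕ → Ω → EReal) (n : ℕ)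
    (μ : Measure Ω) : EReal :=
  eintegral μ (h n) + finEntropy μ (itinerary T q n)

section Invariant

variable [MeasurableSpace F] [MeasurableSingletonClass F] {μ : Measure Ω} [IsProbabilityMeasure μ]

theorem finEntropy_itinerary_add_le (hT : MeasurePreserving T μ μ) (hq : Measurable q) (m n : ℕ) :
    finEntropy μ (itinerary T q (m + n)) ≤
      finEntropy μ (itinerary T q m) + finEntropy μ (itinerary T q n) := by
  have hit := measurable_itinerary hT.measurable hq
  calc finEntropy μ (itinerary T q (m + n))
      = finEntropy μ (fun x => (itinerary T q m x, itinerary T q n (T^[m] x))) := by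
        rw [← finEntropy_equiv_comp (Fin.appendEquiv m n)]
        exact congrArg (finEntropy μ) (funext (itinerary_add T q m n))
    _ ≤ finEntropy μ (itinerary T q m) + finEntropy μ (fun x => itinerary T q n (T^[m] x)) :=
        finEntropy_prodMk_le (hit m) ((hit n).comp (hT.measurable.iterate m))
    _ = finEntropy μ (itinerary T q m) + finEntropy μ (itinerary T q n) := by
        rw [finEntropy_comp_of_measurePreserving (hT.iterate m) (hit n)]

theorem exists_tendsto_finEntropy_itinerary_div (hT : MeasurePreserving T μ μ)
    (hq : Measurable q) :
    ∃ η : ℝ, Tendsto (fun n : ℕ => finEntropy μ (itinerary T q n) / n) atTop (𝓝 η) := by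
  have hsub : Subadditive fun n => finEntropy μ (itinerary T q n) :=
    finEntropy_itinerary_add_le hT hq
  refine ⟨hsub.lim, hsub.tendsto_lim ⟨0, ?_⟩⟩
  rintro _ ⟨n, rfl⟩
  exact div_nonneg finEntropy_nonneg n.cast_nonneg

end Invariant

variable [TopologicalSpace Ω]

section Cocycle

variable {μ : Measure Ω} [IsProbabilityMeasure μ]

theorem IsSubadditiveCocycle.lintegral_toENNReal_ne_top (hh : IsSubadditiveCocycle T X h) (n : ℕ) :
    ∫⁻ x, (h n x).toENNReal ∂μ ≠ ⊤ :=
  let ⟨_, hC⟩ := hh.bddAbove n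
  _root_.lintegral_toENNReal_ne_top hC

theorem IsSubadditiveCocycle.eintegral_ne_top (hh : IsSubadditiveCocycle T X h) (n : ℕ) :
    eintegral μ (h n) ≠ ⊤ :=
  _root_.eintegral_ne_top (hh.lintegral_toENNReal_ne_top n)

theorem IsSubadditiveCocycle.blockPressure_ne_top (hh : IsSubadditiveCocycle T X h) (n : ℕ) :
    blockPressure T q h n μ ≠ ⊤ :=
  EReal.add_ne_top (hh.eintegral_ne_top n) (EReal.coe_ne_top _)

variable [OpensMeasurableSpace Ω]

theorem IsSubadditiveCocycle.eintegral_add_le (hh : IsSubadditiveCocycle T X h)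
    (hT : MeasurePreserving T μ μ) (hX : ∀ᵐ x ∂μ, x ∈ X) (m n : ℕ) :
    eintegral μ (h (m + n)) ≤ eintegral μ (h m) + eintegral μ (h n) := by
  have hmeas (k : ℕ) : Measurable (h k) := (hh.continuous k).measurable
  obtain ⟨C, hC⟩ := hh.bddAbove n
  calc eintegral μ (h (m + n)) ≤ eintegral μ (fun x => h m x + h n (T^[m] x)) :=
        eintegral_mono_ae (hX.mono (hh.le_add m n))
    _ = eintegral μ (h m) + eintegral μ (fun x => h n (T^[m] x)) :=
        eintegral_add (hmeas m) ((hmeas n).comp (hT.measurable.iterate m))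
          (hh.lintegral_toENNReal_ne_top m)
          (_root_.lintegral_toENNReal_ne_top fun x => hC (T^[m] x))
    _ = eintegral μ (h m) + eintegral μ (h n) := by
        rw [eintegral_comp_of_measurePreserving (hT.iterate m) (hmeas n)]

theorem IsSubadditiveCocycle.tendsto_eintegral (hh : IsSubadditiveCocycle T X h)
    (hT : MeasurePreserving T μ μ) (hX : ∀ᵐ x ∂μ, x ∈ X) :
    ∃ a : EReal, a ≠ ⊤ ∧
      Tendsto (fun n : ℕ => (((n : ℝ)⁻¹ : ℝ) : EReal) * eintegral μ (h n)) atTop (𝓝 a) := by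
  refine ⟨_, ne_top_of_le_ne_top ?_ (iInf_le _ 0),
    ereal_tendsto_iInf_of_subadditive hh.eintegral_ne_top (hh.eintegral_add_le hT hX)⟩
  exact ereal_mul_ne_top (by simp) (hh.eintegral_ne_top (0 + 1))

theorem IsSubadditiveCocycle.tendsto_blockPressure [MeasurableSpace F] [MeasurableSingletonClass F]
    (hh : IsSubadditiveCocycle T X h) (hT : MeasurePreserving T μ μ) (hX : ∀ᵐ x ∂μ, x ∈ X)
    (hq : Measurable q) :
    Tendsto (fun n : ℕ => (((n : ℝ)⁻¹ : ℝ) : EReal) * blockPressure T q h n μ) atTop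
      (𝓝 (⨅ n : ℕ, ((((n + 1 : ℕ) : ℝ)⁻¹ : ℝ) : EReal) * blockPressure T q h (n + 1) μ)) := by
  refine ereal_tendsto_iInf_of_subadditive hh.blockPressure_ne_top fun m n => ?_
  calc blockPressure T q h (m + n) μ
      ≤ (eintegral μ (h m) + eintegral μ (h n)) +
          ((finEntropy μ (itinerary T q m) : EReal) + finEntropy μ (itinerary T q n)) :=
        add_le_add (hh.eintegral_add_le hT hX m n)
          (mod_cast finEntropy_itinerary_add_le hT hq m n)
    _ = blockPressure T q h m μ + blockPressure T q h n μ := add_add_add_comm _ _ _ _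

end Cocycle

theorem IsSubadditiveCocycle.upperSemicontinuous_blockPressure [OpensMeasurableSpace Ω]
    [HasOuterApproxClosed Ω] [TopologicalSpace F] [DiscreteTopology F]
    (hh : IsSubadditiveCocycle T X h) (hT : Continuous T) (hq : Continuous q) (n : ℕ) :
    UpperSemicontinuous fun μ : ProbabilityMeasure Ω => blockPressure T q h n μ := by
  obtain ⟨C, hC⟩ := hh.bddAbove n
  have hit : Continuous (itinerary T q n) := continuous_pi fun i => hq.comp (hT.iterate i)
  refine UpperSemicontinuous.add' (upperSemicontinuous_eintegral (hh.continuous n) hC)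
    (continuous_coe_real_ereal.comp (continuous_finEntropy hit)).upperSemicontinuous fun μ => ?_
  exact EReal.continuousAt_add (.inr (EReal.coe_ne_bot _)) (.inr (EReal.coe_ne_top _))

section Mixture

variable {s t : ℝ} {μ₁ μ₂ : Measure Ω} [IsProbabilityMeasure μ₁] [IsProbabilityMeasure μ₂]

theorem IsSubadditiveCocycle.mul_blockPressure_add_mul (hh : IsSubadditiveCocycle T X h)
    (hs : 0 ≤ s) (ht : 0 ≤ t) (n : ℕ) :
    s * blockPressure T q h n μ₁ + t * blockPressure T q h n μ₂ =
      eintegral (ENNReal.ofReal s • μ₁ + ENNReal.ofReal t • μ₂) (h n) +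
        (s * finEntropy μ₁ (itinerary T q n) + t * finEntropy μ₂ (itinerary T q n) : ℝ) := by
  have hdist {c : ℝ} (hc : 0 ≤ c) (x y : EReal) : (c : EReal) * (x + y) = c * x + c * y :=
    EReal.left_distrib_of_nonneg_of_ne_top (mod_cast hc) (EReal.coe_ne_top c) x y
  rw [eintegral_add_smul_measure hs ht (hh.lintegral_toENNReal_ne_top n)
    (hh.lintegral_toENNReal_ne_top n), blockPressure, blockPressure, hdist hs, hdist ht,
    add_add_add_comm, EReal.coe_add, EReal.coe_mul, EReal.coe_mul]

theorem IsSubadditiveCocycle.add_blockPressure_le (hh : IsSubadditiveCocycle T X h)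
    (hs : 0 ≤ s) (ht : 0 ≤ t) (hst : s + t = 1) (n : ℕ) :
    s * blockPressure T q h n μ₁ + t * blockPressure T q h n μ₂ ≤
      blockPressure T q h n (ENNReal.ofReal s • μ₁ + ENNReal.ofReal t • μ₂) := by
  rw [hh.mul_blockPressure_add_mul hs ht, blockPressure]
  gcongr
  exact mod_cast add_finEntropy_le hs ht hst μ₁ μ₂ (itinerary T q n)

theorem IsSubadditiveCocycle.blockPressure_le_add [MeasurableSpace F] [MeasurableSingletonClass F]
    (hh : IsSubadditiveCocycle T X h) (hs : 0 ≤ s) (ht : 0 ≤ t) (hT : Measurable T)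
    (hq : Measurable q) (n : ℕ) :
    blockPressure T q h n (ENNReal.ofReal s • μ₁ + ENNReal.ofReal t • μ₂) ≤
      s * blockPressure T q h n μ₁ + t * blockPressure T q h n μ₂ +
        (Real.negMulLog s + Real.negMulLog t : ℝ) := by
  rw [hh.mul_blockPressure_add_mul hs ht, add_assoc, ← EReal.coe_add, blockPressure]
  gcongr
  exact finEntropy_le_add hs ht μ₁ μ₂ (measurable_itinerary hT hq n)

end Mixture

end BlockPressure

section SequenceSpace

variable {A B : Type}

theorem shiftMap_iterate_apply (n : ℕ) (x : ℕ → A) (i : ℕ) : shiftMap^[n] x i = x (n + i) := by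
  induction n generalizing x with
  | zero => simp
  | succ n ih => rw [Function.iterate_succ_apply, ih, shiftMap, add_right_comm]

theorem continuous_shiftMap [TopologicalSpace A] : Continuous (shiftMap : (ℕ → A) → ℕ → A) :=
  continuous_pi fun i => continuous_apply (i + 1)

theorem continuous_blockMap [TopologicalSpace A] [TopologicalSpace B] {π : A → B}
    (hπ : Continuous π) : Continuous (blockMap π) :=
  continuous_pi fun i => hπ.comp (continuous_apply i)

theorem measurable_shiftMap [MeasurableSpace A] : Measurable (shiftMap : (ℕ → A) → ℕ → A) :=
  measurable_pi_lambda _ fun i => measurable_pi_apply (i + 1)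

theorem measurePreserving_of_mem_MInv [MeasurableSpace A] {X : Set (ℕ → A)}
    {μ : ProbabilityMeasure (ℕ → A)} (hμ : μ ∈ MInv X) :
    MeasurePreserving shiftMap (μ : Measure (ℕ → A)) μ :=
  ⟨measurable_shiftMap, hμ.1⟩

theorem ae_mem_of_mem_MInv [MeasurableSpace A] {X : Set (ℕ → A)} (hX : MeasurableSet X)
    {μ : ProbabilityMeasure (ℕ → A)} (hμ : μ ∈ MInv X) :
    ∀ᵐ x ∂(μ : Measure (ℕ → A)), x ∈ X :=
  (mem_ae_iff_prob_eq_one hX).2 hμ.2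

end SequenceSpace

section Potential

theorem exists_continuous_extension_log {Ω : Type*} [TopologicalSpace Ω] [CompactSpace Ω]
    [NormalSpace Ω] {X : Set Ω} (hX : IsClosed X) {f : Ω → ℝ} (hf : ContinuousOn f X) :
    ∃ g : Ω → EReal, Continuous g ∧ (∃ C : ℝ, ∀ x, g x ≤ C) ∧
      ∀ x ∈ X, g x = ENNReal.log (ENNReal.ofReal (f x)) := by
  obtain ⟨g, hg⟩ := ContinuousMap.exists_restrict_eq hX
    ⟨fun x : X => (f x).toNNReal, continuous_real_toNNReal.comp hf.domRestrict⟩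
  obtain ⟨M, hM⟩ := (isCompact_range g.continuous).bddAbove
  refine ⟨fun x => ENNReal.log (g x), ?_, ⟨Real.log (M + 1), fun x => ?_⟩, fun x hx => ?_⟩
  · exact ENNReal.continuous_log.comp (ENNReal.continuous_coe.comp g.continuous)
  · rw [← ENNReal.log_ofReal_of_pos (by positivity)]
    refine ENNReal.log_monotone ?_
    rw [← ENNReal.ofReal_coe_nnreal]
    exact ENNReal.ofReal_le_ofReal ((NNReal.coe_le_coe.2 (hM ⟨x, rfl⟩)).trans (by simp))
  · exact congrArg (fun r : ℝ≥0 => ENNReal.log r) (DFunLike.congr_fun hg ⟨x, hx⟩)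

variable {A : Type} [TopologicalSpace A] {X : Set (ℕ → A)} {φ : ℕ → (ℕ → A) → ℝ}

theorem log_ofReal_mul {a b : ℝ} (ha : 0 ≤ a) :
    ENNReal.log (ENNReal.ofReal (a * b)) =
      ENNReal.log (ENNReal.ofReal a) + ENNReal.log (ENNReal.ofReal b) := by
  rw [ENNReal.ofReal_mul ha, ENNReal.log_mul_add]

theorem exists_isSubadditiveCocycle [CompactSpace A] [T2Space A] (hX : IsClosed X)
    (hshift : Set.MapsTo shiftMap X X) (hφ : SubaddPot X φ) :
    ∃ h, IsSubadditiveCocycle shiftMap X h ∧ ∃ C : ℝ, ∀ n, 1 ≤ n → ∀ x ∈ X,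
      ENNReal.log (ENNReal.ofReal (φ n x)) = h n x + C := by
  obtain ⟨hcont, hnonneg, c, hc, hmul⟩ := hφ
  set ψ : ℕ → (ℕ → A) → ℝ := fun n x => if n = 0 then 1 else c * φ n x with hψ
  have hψcont (n : ℕ) : ContinuousOn (ψ n) X := by
    rcases n.eq_zero_or_pos with rfl | hn
    · exact continuousOn_const
    · simp only [hψ, hn.ne', if_false]
      exact continuousOn_const.mul (hcont n hn)
  have hψnonneg (n : ℕ) : ∀ x ∈ X, 0 ≤ ψ n x := by
    rcases n.eq_zero_or_pos with rfl | hn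
    · simp [hψ]
    · simpa only [hψ, hn.ne', if_false] using fun x hx => mul_nonneg hc.le (hnonneg n hn x hx)
  have hψmul (m n : ℕ) : ∀ x ∈ X, ψ (m + n) x ≤ ψ m x * ψ n (shiftMap^[m] x) := by
    intro x hx
    rcases m.eq_zero_or_pos with rfl | hm
    · simp [hψ]
    rcases n.eq_zero_or_pos with rfl | hn
    · simp [hψ]
    simp only [hψ, hm.ne', hn.ne', (Nat.add_pos_left hm n).ne', if_false]
    linarith [mul_le_mul_of_nonneg_left (hmul m n hm hn x hx) hc.le]
  choose h hh_cont hh_bdd hh using fun n => exists_continuous_extension_log hX (hψcont n)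
  refine ⟨h, ⟨hh_cont, hh_bdd, fun m n x hx => ?_⟩, -Real.log c, fun n hn x hx => ?_⟩
  · rw [hh _ x hx, hh m x hx, hh n _ (hshift.iterate m hx), ← log_ofReal_mul (hψnonneg m x hx)]
    exact ENNReal.log_monotone (ENNReal.ofReal_le_ofReal (hψmul m n x hx))
  · rw [hh n x hx]
    simp only [hψ, Nat.ne_of_gt hn, if_false]
    rw [log_ofReal_mul hc.le, ENNReal.log_ofReal_of_pos hc, add_right_comm, ← EReal.coe_add,
      add_neg_cancel, EReal.coe_zero, zero_add]

end Potential

section PressureValue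

theorem cyl_ofFn {A : Type} (n : ℕ) (w : Fin n → A) :
    cyl (List.ofFn w) = itinerary shiftMap (fun x : ℕ → A => x 0) n ⁻¹' {w} := by
  ext x
  simp only [cyl, Set.mem_ofPred_eq, Set.mem_preimage, Set.mem_singleton_iff, funext_iff, itinerary,
    shiftMap_iterate_apply, Fin.forall_iff, List.length_ofFn, List.get_ofFn]
  rfl

variable {A : Type} [MeasurableSpace A] {X : Set (ℕ → A)} {μ : ProbabilityMeasure (ℕ → A)}

theorem tendsto_eintegral_PhiStar [TopologicalSpace A] [OpensMeasurableSpace (ℕ → A)]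
    {φ : ℕ → (ℕ → A) → ℝ} {h : ℕ → (ℕ → A) → EReal} (hh : IsSubadditiveCocycle shiftMap X h) {C : ℝ}
    (hnonneg : ∀ n, 1 ≤ n → ∀ x ∈ X, 0 ≤ φ n x)
    (hC : ∀ n, 1 ≤ n → ∀ x ∈ X, ENNReal.log (ENNReal.ofReal (φ n x)) = h n x + C)
    (hμX : ∀ᵐ x ∂(μ : Measure (ℕ → A)), x ∈ X)
    (hμ : MeasurePreserving shiftMap (μ : Measure (ℕ → A)) μ) :
    PhiStar μ φ ≠ ⊤ ∧ Tendsto (fun n : ℕ => (((n : ℝ)⁻¹ : ℝ) : EReal) * eintegral μ (h n)) atTop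
      (𝓝 (PhiStar μ φ)) := by
  obtain ⟨a, ha_top, ha⟩ := hh.tendsto_eintegral hμ hμX
  have hlog (n : ℕ) (hn : 1 ≤ n) : intlog μ (φ n) = eintegral μ (h n) + C := by
    rw [intlog_eq_eintegral (hμX.mono (hnonneg n hn)),
      ← eintegral_add_coe (hh.continuous n).measurable (hh.lintegral_toENNReal_ne_top n)]
    exact eintegral_congr_ae (hμX.mono (hC n hn))
  have hlim : Tendsto (fun n : ℕ => (((n : ℝ)⁻¹ : ℝ) : EReal) * intlog μ (φ n)) atTop (𝓝 a) := by
    refine (ereal_tendsto_inv_mul_add_coe C ha).congr' ?_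
    filter_upwards [eventually_ge_atTop 1] with n hn
    rw [hlog n hn]
  rw [PhiStar, hlim.liminf_eq]
  exact ⟨ha_top, ha⟩

variable [Fintype A]

theorem Hblock_eq_finEntropy (hμ : ∀ᵐ x ∂(μ : Measure (ℕ → A)), x ∈ X) (n : ℕ) :
    Hblock X μ n = finEntropy μ (itinerary shiftMap (fun x : ℕ → A => x 0) n) := by
  have hmw (w : Fin n → A) : mw X μ (List.ofFn w) =
      (μ : Measure (ℕ → A)).real (itinerary shiftMap (fun x : ℕ → A => x 0) n ⁻¹' {w}) := by
    rw [mw, cyl_ofFn, Measure.real,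
      measure_congr (inter_ae_eq_left_of_ae_eq_univ (t := X) (eventuallyEq_univ.2 hμ))]
  simp only [Hblock, finEntropy, Real.negMulLog, neg_mul, Finset.sum_neg_distrib, hmw]

theorem tendsto_finEntropy_itinerary_ent [MeasurableSingletonClass A]
    (hμX : ∀ᵐ x ∂(μ : Measure (ℕ → A)), x ∈ X)
    (hμ : MeasurePreserving shiftMap (μ : Measure (ℕ → A)) μ) :
    Tendsto (fun n : ℕ => finEntropy μ (itinerary shiftMap (fun x : ℕ → A => x 0) n) / n) atTop
      (𝓝 (ent X μ)) := by
  obtain ⟨η, hη⟩ := exists_tendsto_finEntropy_itinerary_div hμ (measurable_pi_apply 0)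
  simp only [ent, Hblock_eq_finEntropy hμX, hη.liminf_eq]
  exact hη

theorem exists_tendsto_blockPressure_eqVal [TopologicalSpace A] [DiscreteTopology A] [BorelSpace A]
    {φ : ℕ → (ℕ → A) → ℝ} (hX : IsClosed X) (hshift : Set.MapsTo shiftMap X X)
    (hφ : SubaddPot X φ) :
    ∃ h, IsSubadditiveCocycle shiftMap X h ∧ ∀ μ ∈ MInv X,
      Tendsto (fun n : ℕ => (((n : ℝ)⁻¹ : ℝ) : EReal) *
        blockPressure shiftMap (fun x : ℕ → A => x 0) h n μ) atTop (𝓝 (eqVal X φ μ)) := by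
  obtain ⟨h, hh, C, hC⟩ := exists_isSubadditiveCocycle hX hshift hφ
  refine ⟨h, hh, fun μ hμ => ?_⟩
  have hinv := measurePreserving_of_mem_MInv hμ
  have hμX := ae_mem_of_mem_MInv hX.measurableSet hμ
  obtain ⟨htop, hPhi⟩ := tendsto_eintegral_PhiStar hh hφ.2.1 hC hμX hinv
  refine (ereal_tendsto_add hPhi ((continuous_coe_real_ereal.tendsto _).comp
    (tendsto_finEntropy_itinerary_ent hμX hinv)) (.inl htop)
    (.inr (EReal.coe_ne_top _))).congr fun n => ?_
  rw [blockPressure, ereal_inv_natCast_mul_add, Function.comp_apply, div_eq_inv_mul,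
    EReal.coe_mul]

end PressureValue

section PressureValueProperties

variable {A : Type} [Fintype A] [TopologicalSpace A] [DiscreteTopology A] [MeasurableSpace A]
  [BorelSpace A] {X : Set (ℕ → A)} {φ : ℕ → (ℕ → A) → ℝ}

theorem exists_eqVal_eq_iInf (hX : IsClosed X) (hshift : Set.MapsTo shiftMap X X)
    (hφ : SubaddPot X φ) :
    ∃ h, IsSubadditiveCocycle shiftMap X h ∧ ∀ μ ∈ MInv X, eqVal X φ μ =
      ⨅ n : ℕ, ((((n + 1 : ℕ) : ℝ)⁻¹ : ℝ) : EReal) *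
        blockPressure shiftMap (fun x : ℕ → A => x 0) h (n + 1) μ := by
  obtain ⟨h, hh, hlim⟩ := exists_tendsto_blockPressure_eqVal hX hshift hφ
  exact ⟨h, hh, fun μ hμ => tendsto_nhds_unique (hlim μ hμ) <|
    hh.tendsto_blockPressure (measurePreserving_of_mem_MInv hμ)
      (ae_mem_of_mem_MInv hX.measurableSet hμ) (measurable_pi_apply 0)⟩

theorem eqVal_ne_top (hX : IsClosed X) (hshift : Set.MapsTo shiftMap X X) (hφ : SubaddPot X φ)
    {μ : ProbabilityMeasure (ℕ → A)} (hμ : μ ∈ MInv X) : eqVal X φ μ ≠ ⊤ := by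
  obtain ⟨h, hh, heq⟩ := exists_eqVal_eq_iInf hX hshift hφ
  rw [heq μ hμ]
  exact ne_top_of_le_ne_top (ereal_mul_ne_top (by simp) (hh.blockPressure_ne_top (0 + 1)))
    (iInf_le _ 0)

theorem upperSemicontinuousOn_eqVal (hX : IsClosed X) (hshift : Set.MapsTo shiftMap X X)
    (hφ : SubaddPot X φ) : UpperSemicontinuousOn (eqVal X φ) (MInv X) := by
  obtain ⟨h, hh, heq⟩ := exists_eqVal_eq_iInf hX hshift hφ
  have husc : UpperSemicontinuousOn (fun μ : ProbabilityMeasure (ℕ → A) =>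
      ⨅ n : ℕ, ((((n + 1 : ℕ) : ℝ)⁻¹ : ℝ) : EReal) *
        blockPressure shiftMap (fun x : ℕ → A => x 0) h (n + 1) μ) (MInv X) := by
    refine upperSemicontinuousOn_iInf fun n => ?_
    have hcont : Continuous fun x : EReal => ((((n + 1 : ℕ) : ℝ)⁻¹ : ℝ) : EReal) * x :=
      continuous_iff_continuousAt.2 fun x =>
        EReal.Tendsto.const_mul tendsto_id (by simp) (by simp)
    exact (hcont.comp_upperSemicontinuous
      (hh.upperSemicontinuous_blockPressure continuous_shiftMap (continuous_apply 0) (n + 1))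
      fun x y hxy => mul_le_mul_of_nonneg_left hxy (by positivity)).upperSemicontinuousOn _
  exact fun μ hμ => (husc μ hμ).congr_of_eventuallyEq hμ
    (eventually_nhdsWithin_of_forall fun η hη y => by rw [heq η hη])

/-- Affine functions on a set of probability measures. Only proper convex combinations are
considered, so that no product `0 * ⊥` is ever formed. -/
def AffineOnPM {Ω : Type*} [MeasurableSpace Ω] (K : Set (ProbabilityMeasure Ω))
    (G : ProbabilityMeasure Ω → EReal) : Prop :=
  ∀ μ₁ ∈ K, ∀ μ₂ ∈ K, ∀ t : ℝ, 0 < t → t < 1 → ∀ μ ∈ K,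
    (μ : Measure Ω) = ENNReal.ofReal t • (μ₁ : Measure Ω) +
      ENNReal.ofReal (1 - t) • (μ₂ : Measure Ω) →
    G μ = t * G μ₁ + ((1 - t : ℝ) : EReal) * G μ₂

theorem AffineOnPM.mono {Ω : Type*} [MeasurableSpace Ω] {K K' : Set (ProbabilityMeasure Ω)}
    {G : ProbabilityMeasure Ω → EReal} (hG : AffineOnPM K G) (hK : K' ⊆ K) : AffineOnPM K' G :=
  fun μ₁ hμ₁ μ₂ hμ₂ t ht₀ ht₁ μ hμ =>
    hG μ₁ (hK hμ₁) μ₂ (hK hμ₂) t ht₀ ht₁ μ (hK hμ)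

theorem affineOnPM_eqVal (hX : IsClosed X) (hshift : Set.MapsTo shiftMap X X)
    (hφ : SubaddPot X φ) : AffineOnPM (MInv X) (eqVal X φ) := by
  intro μ₁ hμ₁ μ₂ hμ₂ t ht₀ ht₁ μ hμ hmix
  have ht₁' : 0 < 1 - t := sub_pos.2 ht₁
  obtain ⟨h, hh, hlim⟩ := exists_tendsto_blockPressure_eqVal hX hshift hφ
  refine ereal_eq_add_of_tendsto_inv_mul (Real.negMulLog t + Real.negMulLog (1 - t)) ht₀ ht₁'
    (eqVal_ne_top hX hshift hφ hμ₁) (eqVal_ne_top hX hshift hφ hμ₂)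
    (hlim μ hμ) (hlim μ₁ hμ₁) (hlim μ₂ hμ₂) (fun n => ?_) (fun n => ?_)
  · rw [hmix]
    exact hh.add_blockPressure_le ht₀.le ht₁'.le (add_sub_cancel t 1) n
  · rw [hmix]
    exact hh.blockPressure_le_add ht₀.le ht₁'.le measurable_shiftMap (measurable_pi_apply 0) n

end PressureValueProperties

section Maximizers

/-- The points of `K` at which `G` attains its maximum over `K`. -/
def maximizers {α : Type*} (K : Set α) (G : α → EReal) : Set α :=
  {a | a ∈ K ∧ IsMaxOn G K a}

theorem isMaxOn_iff_eq_biSup {α : Type*} {K : Set α} {G : α → EReal} {a : α} (ha : a ∈ K) :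
    IsMaxOn G K a ↔ G a = ⨆ b ∈ K, G b :=
  ⟨fun h => le_antisymm (le_biSup G ha) (iSup₂_le h), fun h _ hb => (le_biSup G hb).trans h.ge⟩

theorem nonempty_maximizers {α : Type*} [TopologicalSpace α] {K : Set α} {G : α → EReal}
    (hne : K.Nonempty) (hK : IsCompact K) (hG : UpperSemicontinuousOn G K) :
    (maximizers K G).Nonempty :=
  hG.exists_isMaxOn hne hK

theorem isCompact_maximizers {α : Type*} [TopologicalSpace α] {K : Set α} {G : α → EReal}
    (hK : IsCompact K) (hG : UpperSemicontinuousOn G K) : IsCompact (maximizers K G) := by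
  convert hG.isCompact_inter_preimage_Ici hK (⨆ b ∈ K, G b) using 1
  ext a
  exact and_congr_right fun ha => (isMaxOn_iff_eq_biSup ha).trans
    ⟨fun h => h.ge, (le_biSup G ha).antisymm⟩

theorem ereal_eq_of_le_of_mul_add_mul_eq {t : ℝ} (ht₀ : 0 < t) (ht₁ : t < 1) {x y m : EReal}
    (hm : m ≠ ⊤) (hx : x ≤ m) (hy : y ≤ m) (h : m = t * x + ((1 - t : ℝ) : EReal) * y) :
    x = m := by
  have ht₁' : 0 < 1 - t := sub_pos.2 ht₁
  induction m with
  | top => exact absurd rfl hm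
  | bot => exact le_bot_iff.1 hx
  | coe m =>
    induction x with
    | top => simp at hx
    | bot => simp [EReal.coe_mul_bot_of_pos ht₀] at h
    | coe x =>
      induction y with
      | top => simp at hy
      | bot =>
        rw [EReal.coe_mul_bot_of_pos ht₁', EReal.add_bot] at h
        simp at h
      | coe y =>
        norm_cast at *
        nlinarith

variable {Ω : Type*} [MeasurableSpace Ω] {K : Set (ProbabilityMeasure Ω)}
  {G : ProbabilityMeasure Ω → EReal}

theorem convexPM_maximizers (hK : ConvexPM K) (hG : AffineOnPM K G) :
    ConvexPM (maximizers K G) := by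
  rintro μ₁ ⟨hμ₁, hmax₁⟩ μ₂ ⟨hμ₂, hmax₂⟩ t ht₀ ht₁ μ hμ
  rcases ht₀.eq_or_lt with rfl | ht₀
  · obtain rfl : μ = μ₂ := Subtype.ext (by simpa using hμ)
    exact ⟨hμ₂, hmax₂⟩
  rcases ht₁.eq_or_lt with rfl | ht₁
  · obtain rfl : μ = μ₁ := Subtype.ext (by simpa using hμ)
    exact ⟨hμ₁, hmax₁⟩
  have hμK := hK μ₁ hμ₁ μ₂ hμ₂ t ht₀.le ht₁.le μ hμ
  have h₁₂ : G μ₂ = G μ₁ := le_antisymm (hmax₁ hμ₂) (hmax₂ hμ₁)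
  have h : G μ = G μ₁ := by
    rw [hG μ₁ hμ₁ μ₂ hμ₂ t ht₀ ht₁ μ hμK hμ, h₁₂,
      ← EReal.right_distrib_of_nonneg (mod_cast ht₀.le) (mod_cast (sub_pos.2 ht₁).le),
      ← EReal.coe_add, add_sub_cancel, EReal.coe_one, one_mul]
  exact ⟨hμK, fun η hη => (hmax₁ hη : G η ≤ G μ₁).trans_eq h.symm⟩

theorem isExtremePM_of_isExtremePM_maximizers (hG : AffineOnPM K G) (htop : ∀ μ ∈ K, G μ ≠ ⊤)
    {μ : ProbabilityMeasure Ω} (hμ : IsExtremePM (maximizers K G) μ) : IsExtremePM K μ := by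
  obtain ⟨⟨hμK, hmax⟩, hext⟩ := hμ
  refine ⟨hμK, fun μ₁ hμ₁ μ₂ hμ₂ t ht₀ ht₁ hmix => ?_⟩
  have haff := hG μ₁ hμ₁ μ₂ hμ₂ t ht₀ ht₁ μ hμK hmix
  have h₁ : G μ₁ = G μ :=
    ereal_eq_of_le_of_mul_add_mul_eq ht₀ ht₁ (htop μ hμK) (hmax hμ₁) (hmax hμ₂) haff
  have h₂ : G μ₂ = G μ :=
    ereal_eq_of_le_of_mul_add_mul_eq (t := 1 - t) (sub_pos.2 ht₁) (sub_lt_self 1 ht₀)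
      (htop μ hμK) (hmax hμ₂) (hmax hμ₁) (by rwa [sub_sub_cancel, add_comm])
  exact hext μ₁ ⟨hμ₁, fun η hη => (hmax hη : G η ≤ G μ).trans_eq h₁.symm⟩
    μ₂ ⟨hμ₂, fun η hη => (hmax hη : G η ≤ G μ).trans_eq h₂.symm⟩ t ht₀ ht₁ hmix

end Maximizers

section LiftsOfMeasures

theorem exists_measurable_approximate_sections {Ω E : Type*} [MeasurableSpace Ω]
    [TopologicalSpace E] [TopologicalSpace.PseudoMetrizableSpace E] [MeasurableSpace E]
    [OpensMeasurableSpace E] {f : Ω → E} {X : Set Ω} (hX : X.Nonempty)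
    (hfX : TopologicalSpace.IsSeparable (f '' X)) :
    ∃ s : ℕ → E → Ω, (∀ n, Measurable (s n)) ∧ (∀ n y, s n y ∈ X) ∧
      ∀ y ∈ f '' X, Tendsto (fun n => f (s n y)) atTop (𝓝 y) := by
  let := TopologicalSpace.pseudoMetrizableSpacePseudoMetric E
  obtain ⟨x₀, hx₀⟩ := hX
  have : Nonempty Ω := ⟨x₀⟩
  have := hfX.separableSpace
  have hy₀ : f x₀ ∈ f '' X := ⟨x₀, hx₀, rfl⟩
  let p := SimpleFunc.approxOn id measurable_id (f '' X) (f x₀) hy₀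
  have hp : ∀ n y, p n y ∈ f '' X := SimpleFunc.approxOn_mem measurable_id hy₀
  refine ⟨fun n => (p n).map (Function.invFunOn f X), fun n => SimpleFunc.measurable _,
    fun n y => Function.invFunOn_mem (hp n y), fun y hy => ?_⟩
  have hsection : ∀ n, f ((p n).map (Function.invFunOn f X) y) = p n y := fun n =>
    Function.invFunOn_eq (hp n y)
  simp only [hsection]
  exact SimpleFunc.tendsto_approxOn measurable_id hy₀ (x := y) (subset_closure hy)

theorem isClosed_probabilityMeasure_map_eq {Ω E : Type*} [TopologicalSpace Ω] [MeasurableSpace Ω]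
    [OpensMeasurableSpace Ω] [TopologicalSpace E] [MeasurableSpace E] [BorelSpace E]
    [HasOuterApproxClosed E] {f : Ω → E} (hf : Continuous f) (ν : ProbabilityMeasure E) :
    IsClosed {μ : ProbabilityMeasure Ω | (μ : Measure Ω).map f = ν} := by
  convert isClosed_eq (ProbabilityMeasure.continuous_map hf) (continuous_const (y := ν)) using 1
  ext μ
  exact ProbabilityMeasure.toMeasure_injective.eq_iff (a := μ.map hf.aemeasurable)

variable {Ω : Type*} [TopologicalSpace Ω] [MeasurableSpace Ω] [BorelSpace Ω]
  [HasOuterApproxClosed Ω]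

theorem isClosed_probabilityMeasure_map_eq_self {T : Ω → Ω} (hT : Continuous T) :
    IsClosed {μ : ProbabilityMeasure Ω | (μ : Measure Ω).map T = μ} := by
  convert isClosed_eq (ProbabilityMeasure.continuous_map hT) continuous_id using 1
  ext μ
  exact ProbabilityMeasure.toMeasure_injective.eq_iff (a := μ.map hT.aemeasurable)

theorem isClosed_probabilityMeasure_eq_one {X : Set Ω} (hX : IsClosed X) :
    IsClosed {μ : ProbabilityMeasure Ω | (μ : Measure Ω) X = 1} := by
  refine isClosed_iff_ultrafilter.2 fun μ u hu hX₁ => prob_le_one.antisymm ?_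
  calc (1 : ℝ≥0∞) = limsup (fun η : ProbabilityMeasure Ω => (η : Measure Ω) X) u := by
        rw [limsup_congr (show (fun η : ProbabilityMeasure Ω => (η : Measure Ω) X) =ᶠ[u]
          fun _ => 1 from hX₁), limsup_const]
    _ ≤ (μ : Measure Ω) X :=
        ProbabilityMeasure.limsup_measure_closed_le_of_tendsto (tendsto_id'.2 hu) hX

theorem exists_probabilityMeasure_map_eq [CompactSpace Ω] [T2Space Ω] {E : Type*}
    [TopologicalSpace E] [TopologicalSpace.PseudoMetrizableSpace E]
    [MeasurableSpace E] [BorelSpace E] {X : Set Ω} (hX : IsClosed X)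
    {f : Ω → E} (hf : Continuous f) {ν : ProbabilityMeasure E}
    (hν : ∀ᵐ y ∂(ν : Measure E), y ∈ f '' X) :
    ∃ m : ProbabilityMeasure Ω, (m : Measure Ω) X = 1 ∧ (m : Measure Ω).map f = ν := by
  obtain ⟨_, x₀, hx₀, -⟩ := hν.exists
  obtain ⟨s, hs, hsX, hlim⟩ :=
    exists_measurable_approximate_sections ⟨x₀, hx₀⟩ (hX.isCompact.image hf).isSeparable
  have hfs : ∀ n, AEMeasurable (f ∘ s n) (ν : Measure E) := fun n =>
    (hf.measurable.comp (hs n)).aemeasurable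
  let m : ℕ → ProbabilityMeasure Ω := fun n => ν.map (hs n).aemeasurable
  have hmX : ∀ n, (m n : Measure Ω) X = 1 := fun n => by
    rw [ProbabilityMeasure.map_apply' _ _ hX.measurableSet,
      show s n ⁻¹' X = Set.univ from Set.eq_univ_of_forall (hsX n), measure_univ]
  have hm : Tendsto (fun n => (m n).map hf.aemeasurable) atTop (𝓝 ν) := by
    have hmap : ∀ n, (m n).map hf.aemeasurable = ν.map (hfs n) := fun n =>
      Subtype.ext (Measure.map_map hf.measurable (hs n))
    have hid : ν.map aemeasurable_id = ν := Subtype.ext Measure.map_id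
    simp only [hmap]
    nth_rw 2 [← hid]
    exact (tendstoInDistribution_of_ae_tendsto hfs aemeasurable_id (hν.mono hlim)).tendsto
  have hclosed := ((isClosed_probabilityMeasure_eq_one hX).isCompact.image
    (ProbabilityMeasure.continuous_map hf)).isClosed
  obtain ⟨m₀, hm₀X, rfl⟩ := hclosed.mem_of_tendsto hm
    (Eventually.of_forall fun n => Set.mem_image_of_mem _ (hmX n))
  exact ⟨m₀, hm₀X, rfl⟩

end LiftsOfMeasures

section KrylovBogolyubov

variable {Ω : Type*} [MeasurableSpace Ω] {T : Ω → Ω}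

/-- The Cesàro average `(n + 1)⁻¹ ∑_{i ≤ n} T^i_* m` of the images of a probability measure. -/
noncomputable def cesaroMeasure (T : Ω → Ω) (m : Measure Ω) (n : ℕ) : Measure Ω :=
  ((n + 1 : ℕ) : ℝ≥0∞)⁻¹ • ∑ i ∈ Finset.range (n + 1), m.map T^[i]

theorem cesaroMeasure_apply_eq_one (hT : Measurable T) {m : Measure Ω} {S : Set Ω}
    (hS : MeasurableSet S) (h : ∀ i, m (T^[i] ⁻¹' S) = 1) (n : ℕ) :
    cesaroMeasure T m n S = 1 := by
  simp only [cesaroMeasure, Measure.smul_apply, Measure.finsetSum_apply,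
    Measure.map_apply (hT.iterate _) hS, h, Finset.sum_const, Finset.card_range, smul_eq_mul,
    nsmul_eq_mul, mul_one]
  exact ENNReal.inv_mul_cancel (by simp) (by finiteness)

theorem isProbabilityMeasure_cesaroMeasure (hT : Measurable T) (m : Measure Ω)
    [IsProbabilityMeasure m] (n : ℕ) : IsProbabilityMeasure (cesaroMeasure T m n) :=
  ⟨cesaroMeasure_apply_eq_one hT .univ (by simp) n⟩

theorem map_cesaroMeasure {E : Type*} [MeasurableSpace E] (hT : Measurable T) {S : E → E}
    {f : Ω → E} (hf : Measurable f) (hfT : Function.Semiconj f T S) {m : Measure Ω}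
    (hm : MeasurePreserving S (m.map f) (m.map f)) (n : ℕ) :
    (cesaroMeasure T m n).map f = m.map f := by
  have hmap : ∀ i, (m.map T^[i]).map f = m.map f := fun i => by
    rw [Measure.map_map hf (hT.iterate i), (hfT.iterate_right i).comp_eq,
      ← Measure.map_map (hm.measurable.iterate i) hf, (hm.iterate i).map_eq]
  ext B hB
  have hB' : ∀ i, (m.map T^[i]) (f ⁻¹' B) = m.map f B := fun i => by
    rw [← Measure.map_apply hf hB, hmap]
  rw [cesaroMeasure, Measure.map_apply hf hB, Measure.smul_apply, Measure.finsetSum_apply]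
  simp only [hB', Finset.sum_const, Finset.card_range, smul_eq_mul, nsmul_eq_mul]
  rw [← mul_assoc, ENNReal.inv_mul_cancel (by simp) (by finiteness), one_mul]

variable [TopologicalSpace Ω] [BorelSpace Ω]

theorem integral_cesaroMeasure (hT : Continuous T) (m : Measure Ω) [IsProbabilityMeasure m]
    (g : BoundedContinuousFunction Ω ℝ) (n : ℕ) :
    ∫ x, g x ∂cesaroMeasure T m n =
      ((n + 1 : ℕ) : ℝ)⁻¹ * ∑ i ∈ Finset.range (n + 1), ∫ x, g (T^[i] x) ∂m := by
  have : ∀ i, IsProbabilityMeasure (m.map T^[i]) := fun i =>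
    Measure.isProbabilityMeasure_map (hT.iterate i).aemeasurable
  rw [cesaroMeasure, integral_smul_measure, integral_finsetSum_measure fun i _ => g.integrable _,
    ENNReal.toReal_inv, ENNReal.toReal_natCast, smul_eq_mul]
  congr 1
  exact Finset.sum_congr rfl fun i _ =>
    integral_map (hT.iterate i).aemeasurable g.continuous.aestronglyMeasurable

theorem norm_integral_comp_sub_integral_cesaroMeasure_le (hT : Continuous T) (m : Measure Ω)
    [IsProbabilityMeasure m] (g : BoundedContinuousFunction Ω ℝ) (n : ℕ) :
    ‖∫ x, g (T x) ∂cesaroMeasure T m n - ∫ x, g x ∂cesaroMeasure T m n‖ ≤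
      ((n + 1 : ℕ) : ℝ)⁻¹ * (‖g‖ + ‖g‖) := by
  have hbound : ∀ i, ‖∫ x, g (T^[i] x) ∂m‖ ≤ ‖g‖ := fun i => by
    simpa using norm_integral_le_of_norm_le_const (μ := m)
      (Eventually.of_forall fun x => g.norm_coe_le_norm (T^[i] x))
  have hcomp := integral_cesaroMeasure hT m (g.compContinuous ⟨T, hT⟩) n
  simp only [BoundedContinuousFunction.compContinuous_apply, ContinuousMap.coe_mk,
    ← Function.iterate_succ_apply' T] at hcomp
  rw [hcomp, integral_cesaroMeasure hT, ← mul_sub, ← Finset.sum_sub_distrib,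
    Finset.sum_range_sub (fun i => ∫ x, g (T^[i] x) ∂m), norm_mul,
    Real.norm_of_nonneg (by positivity)]
  exact mul_le_mul_of_nonneg_left (norm_sub_le_of_le (hbound _) (hbound 0)) (by positivity)

theorem tendsto_map_of_tendsto_cesaroMeasure (hT : Continuous T) (m : Measure Ω)
    [IsProbabilityMeasure m] {η : ℕ → ProbabilityMeasure Ω}
    (hη : ∀ n, (η n : Measure Ω) = cesaroMeasure T m n) {l : Filter ℕ} (hl : l ≤ atTop)
    {μ : ProbabilityMeasure Ω} (hμ : Tendsto η l (𝓝 μ)) :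
    Tendsto (fun n => (η n).map hT.aemeasurable) l (𝓝 μ) := by
  rw [ProbabilityMeasure.tendsto_iff_forall_integral_tendsto] at hμ ⊢
  intro g
  have hdiff : Tendsto (fun n => ∫ x, g (T x) ∂(η n : Measure Ω) - ∫ x, g x ∂(η n : Measure Ω))
      atTop (𝓝 0) := by
    simp only [hη]
    refine squeeze_zero_norm (norm_integral_comp_sub_integral_cesaroMeasure_le hT m g) ?_
    simpa using (tendsto_inv_atTop_nhds_zero_nat.comp (tendsto_add_atTop_nat 1)).mul_const
      (‖g‖ + ‖g‖)
  simpa only [ProbabilityMeasure.toMeasure_map, sub_add_cancel, zero_add,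
    integral_map hT.aemeasurable g.continuous.aestronglyMeasurable] using
    (hdiff.mono_left hl).add (hμ g)

theorem exists_map_eq_self_of_cesaroMeasure_mem [HasOuterApproxClosed Ω] (hT : Continuous T)
    (m : Measure Ω) [IsProbabilityMeasure m] {K : Set (ProbabilityMeasure Ω)} (hK : IsCompact K)
    (hmem : ∀ n, ∃ η ∈ K, (η : Measure Ω) = cesaroMeasure T m n) :
    ∃ μ ∈ K, (μ : Measure Ω).map T = μ := by
  choose η hηK hη using hmem
  obtain ⟨μ, hμK, hμ⟩ := hK.ultrafilter_le_nhds' ((hyperfilter ℕ).map η)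
    (mem_map.2 (univ_mem' hηK))
  have hmap := tendsto_map_of_tendsto_cesaroMeasure hT m hη Nat.hyperfilter_le_atTop hμ
  have hmap' := ((ProbabilityMeasure.continuous_map hT).tendsto μ).comp hμ
  exact ⟨μ, hμK, congrArg ProbabilityMeasure.toMeasure (tendsto_nhds_unique hmap' hmap)⟩

end KrylovBogolyubov

section InvariantFiber

variable {Ω E : Type*} [MeasurableSpace Ω] [MeasurableSpace E] {T : Ω → Ω} {X : Set Ω}
  {S : E → E} {f : Ω → E}

/-- The `T`-invariant probability measures carried by `X` whose image under `f` is `ν`. -/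
def invariantFiber (T : Ω → Ω) (X : Set Ω) (f : Ω → E) (ν : Measure E) :
    Set (ProbabilityMeasure Ω) :=
  {μ | ((μ : Measure Ω).map T = μ ∧ (μ : Measure Ω) X = 1) ∧ (μ : Measure Ω).map f = ν}

theorem convexPM_invariantFiber (hT : Measurable T) (hf : Measurable f) (ν : Measure E) :
    ConvexPM (invariantFiber T X f ν) := by
  rintro μ₁ ⟨⟨hT₁, hX₁⟩, hf₁⟩ μ₂ ⟨⟨hT₂, hX₂⟩, hf₂⟩ t ht₀ ht₁ μ hμ
  have hsum : ENNReal.ofReal t + ENNReal.ofReal (1 - t) = 1 := by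
    rw [← ENNReal.ofReal_add ht₀ (sub_nonneg.2 ht₁), add_sub_cancel, ENNReal.ofReal_one]
  refine ⟨⟨?_, ?_⟩, ?_⟩
  · rw [hμ, Measure.map_add _ _ hT, Measure.map_smul, Measure.map_smul, hT₁, hT₂]
  · rw [hμ, Measure.add_apply, Measure.smul_apply, Measure.smul_apply, hX₁, hX₂, smul_eq_mul,
      smul_eq_mul, mul_one, mul_one, hsum]
  · rw [hμ, Measure.map_add _ _ hf, Measure.map_smul, Measure.map_smul, hf₁, hf₂, ← add_smul,
      hsum, one_smul]

theorem mem_invariantFiber_of_absolutelyContinuous (hX : MeasurableSet X) (hf : Measurable f)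
    (hfT : Function.Semiconj f T S) {ν : Measure E} [IsProbabilityMeasure ν] (hν : Ergodic S ν)
    {μ η : ProbabilityMeasure Ω} (hμ : μ ∈ invariantFiber T X f ν)
    (hη : MeasurePreserving T (η : Measure Ω) η) (hac : (η : Measure Ω) ≪ μ) :
    η ∈ invariantFiber T X f ν := by
  obtain ⟨⟨-, hμX⟩, hμν⟩ := hμ
  refine ⟨⟨hη.map_eq, ?_⟩, ?_⟩
  · exact (prob_compl_eq_zero_iff hX).1 (hac ((prob_compl_eq_zero_iff hX).2 hμX))
  · have := Measure.isProbabilityMeasure_map (μ := (η : Measure Ω)) hf.aemeasurable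
    exact hν.eq_of_absolutelyContinuous (.of_semiconj ⟨hf, rfl⟩ hη hfT hν.measurable)
      (hμν ▸ hac.map hf)

theorem ergodic_of_isExtremePM_invariantFiber (hT : Measurable T) (hX : MeasurableSet X)
    (hf : Measurable f) (hfT : Function.Semiconj f T S) {ν : Measure E}
    [IsProbabilityMeasure ν] (hν : Ergodic S ν) {μ : ProbabilityMeasure Ω}
    (hμ : IsExtremePM (invariantFiber T X f ν) μ) : Ergodic T (μ : Measure Ω) := by
  obtain ⟨hμK, hext⟩ := hμ
  refine .of_mem_extremePoints (mem_extremePoints_iff_left.2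
    ⟨⟨⟨hT, hμK.1.1⟩, inferInstance⟩, ?_⟩)
  rintro μ₁ ⟨hT₁, hprob₁⟩ μ₂ ⟨hT₂, hprob₂⟩ ⟨a, b, ha, hb, hab, hmix⟩
  have hac₁ : μ₁ ≪ μ := hmix ▸ (Measure.absolutelyContinuous_smul ha.ne').add_right _
  have hac₂ : μ₂ ≪ μ := by
    rw [← hmix, add_comm]
    exact (Measure.absolutelyContinuous_smul hb.ne').add_right _
  have hfiber : ∀ η : ProbabilityMeasure Ω, MeasurePreserving T (η : Measure Ω) η →
      (η : Measure Ω) ≪ μ → η ∈ invariantFiber T X f ν := fun η =>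
    mem_invariantFiber_of_absolutelyContinuous hX hf hfT hν hμK
  have ha_top : a ≠ ∞ := (le_self_add.trans_eq hab).trans_lt ENNReal.one_lt_top |>.ne
  have ha_lt : a < 1 := hab ▸ ENNReal.lt_add_right ha_top hb.ne'
  have hb_eq : ENNReal.ofReal (1 - a.toReal) = b := by
    rw [ENNReal.ofReal_sub _ ENNReal.toReal_nonneg, ENNReal.ofReal_toReal ha_top,
      ENNReal.ofReal_one, ← hab, ENNReal.add_sub_cancel_left ha_top]
  have h₁₂ : μ₁ = μ₂ := congrArg ProbabilityMeasure.toMeasure <|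
    hext ⟨μ₁, hprob₁⟩ (hfiber _ hT₁ hac₁) ⟨μ₂, hprob₂⟩ (hfiber _ hT₂ hac₂) a.toReal
      (ENNReal.toReal_pos ha.ne' ha_top)
      (by simpa using ENNReal.toReal_strict_mono ENNReal.one_ne_top ha_lt)
      (by rw [hb_eq, ENNReal.ofReal_toReal ha_top]; exact hmix.symm)
  rw [← hmix, ← h₁₂, ← add_smul, hab, one_smul]

variable [TopologicalSpace Ω] [BorelSpace Ω] [CompactSpace Ω] [T2Space Ω]
  [HasOuterApproxClosed Ω] [TopologicalSpace E] [BorelSpace E]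

theorem isCompact_invariantFiber [HasOuterApproxClosed E] (hT : Continuous T)
    (hX : IsClosed X) (hf : Continuous f)
    (ν : ProbabilityMeasure E) :
    IsCompact (invariantFiber T X f (ν : Measure E)) :=
  (((isClosed_probabilityMeasure_map_eq_self hT).inter
    (isClosed_probabilityMeasure_eq_one hX)).inter
    (isClosed_probabilityMeasure_map_eq hf ν)).isCompact

theorem nonempty_invariantFiber [TopologicalSpace.PseudoMetrizableSpace E] (hT : Continuous T)
    (hX : IsClosed X) (hTX : Set.MapsTo T X X) (hf : Continuous f)
    (hfT : Function.Semiconj f T S) {ν : ProbabilityMeasure E}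
    (hν : MeasurePreserving S (ν : Measure E) ν) (hνX : ∀ᵐ y ∂(ν : Measure E), y ∈ f '' X) :
    (invariantFiber T X f (ν : Measure E)).Nonempty := by
  obtain ⟨m, hmX, hmν⟩ := exists_probabilityMeasure_map_eq hX hf hνX
  have hmTX : ∀ i, (m : Measure Ω) (T^[i] ⁻¹' X) = 1 := fun i =>
    prob_le_one.antisymm (hmX.symm.trans_le (measure_mono (hTX.iterate i)))
  obtain ⟨μ, ⟨hμX, hμν⟩, hμT⟩ := exists_map_eq_self_of_cesaroMeasure_mem hT m
    ((isClosed_probabilityMeasure_eq_one hX).inter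
      (isClosed_probabilityMeasure_map_eq hf ν)).isCompact fun n =>
    ⟨⟨cesaroMeasure T m n, isProbabilityMeasure_cesaroMeasure hT.measurable m n⟩,
      ⟨cesaroMeasure_apply_eq_one hT.measurable hX.measurableSet hmTX n,
        (map_cesaroMeasure hT.measurable hf.measurable hfT (hmν.symm ▸ hν) n).trans hmν⟩, rfl⟩
  exact ⟨μ, ⟨hμT, hμX⟩, hμν⟩

end InvariantFiber

section ConditionalEquilibriumStates

theorem lang_wordOf {A : Type} {X : Set (ℕ → A)} {x : ℕ → A} (hx : x ∈ X) (n : ℕ) :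
    Lang X (wordOf x n) :=
  ⟨x, fun i => (List.get_ofFn (fun j : Fin n => x j) i).symm, hx⟩

theorem wordOf_add {A : Type} (n m : ℕ) (x : ℕ → A) :
    wordOf x (n + m) = wordOf x n ++ wordOf (shiftMap^[n] x) m := by
  simp [wordOf, List.ofFn_add, shiftMap_iterate_apply]

theorem subaddPot_genPot {A : Type} [TopologicalSpace A] [DiscreteTopology A] {X : Set (ℕ → A)}
    {φ : List A → ℝ} (hφ : Submult X φ) : SubaddPot X (genPot φ) := by
  obtain ⟨hφ₀, -, c, hc, hφ⟩ := hφ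
  refine ⟨fun n _ => ?_, fun n _ x hx => hφ₀ _ (lang_wordOf hx n), c⁻¹, inv_pos.2 hc,
    fun n m _ _ x hx => ?_⟩
  · exact (continuous_of_discreteTopology (f := fun w : Fin n → A => φ (List.ofFn w))).comp
      (continuous_pi fun i : Fin n => continuous_apply (i : ℕ)) |>.continuousOn
  · simp only [genPot, wordOf_add]
    exact hφ _ _ (wordOf_add n m x ▸ lang_wordOf hx (n + m))

theorem condEqSet_eq_maximizers {A B : Type} [Fintype A] [MeasurableSpace A] [MeasurableSpace B]
    (X : Set (ℕ → A)) (π : A → B) (φ : ℕ → (ℕ → A) → ℝ) (ν : Measure (ℕ → B)) :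
    CondEqSet X π φ ν = maximizers (invariantFiber shiftMap X (blockMap π) ν) (eqVal X φ) :=
  Set.ext fun μ => and_assoc.symm.trans <| and_congr_right fun hμ =>
    (isMaxOn_iff_eq_biSup (K := invariantFiber shiftMap X (blockMap π) ν) (a := μ) hμ).symm

theorem weighted_eq_states_stmt_6_general {A B : Type}
    [Fintype A] [TopologicalSpace A] [DiscreteTopology A] [MeasurableSpace A] [BorelSpace A]
    [TopologicalSpace B] [TopologicalSpace.MetrizableSpace B] [SecondCountableTopology B]
    [MeasurableSpace B] [BorelSpace B]
    {X : Set (ℕ → A)} (hX : IsClosed X) (hshift : Set.MapsTo shiftMap X X) (π : A → B)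
    {φ : ℕ → (ℕ → A) → ℝ} (hφ : SubaddPot X φ)
    {ν : ProbabilityMeasure (ℕ → B)} (hν : ν ∈ MInv (blockMap π '' X)) :
    (CondEqSet X π φ (ν : Measure (ℕ → B))).Nonempty ∧
    IsCompact (CondEqSet X π φ (ν : Measure (ℕ → B))) ∧
    ConvexPM (CondEqSet X π φ (ν : Measure (ℕ → B))) ∧
    (Ergodic shiftMap (ν : Measure (ℕ → B)) →
      ∀ μ : ProbabilityMeasure (ℕ → A),
        IsExtremePM (CondEqSet X π φ (ν : Measure (ℕ → B))) μ →
        Ergodic shiftMap (μ : Measure (ℕ → A))) := by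
  let K := invariantFiber shiftMap X (blockMap π) (ν : Measure (ℕ → B))
  have hπ : Continuous (blockMap π) := continuous_blockMap continuous_of_discreteTopology
  have hsemi : Function.Semiconj (blockMap π) shiftMap shiftMap := fun _ => rfl
  have hKX : K ⊆ MInv X := fun _ hμ => hμ.1
  have hK : IsCompact K := isCompact_invariantFiber continuous_shiftMap hX hπ ν
  have hconv : ConvexPM K := convexPM_invariantFiber measurable_shiftMap hπ.measurable _
  have hne : K.Nonempty :=
    nonempty_invariantFiber continuous_shiftMap hX hshift hπ hsemi
      (measurePreserving_of_mem_MInv hν)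
      (ae_mem_of_mem_MInv (hX.isCompact.image hπ).measurableSet hν)
  have husc : UpperSemicontinuousOn (eqVal X φ) K :=
    (upperSemicontinuousOn_eqVal hX hshift hφ).mono hKX
  have haff : AffineOnPM K (eqVal X φ) := (affineOnPM_eqVal hX hshift hφ).mono hKX
  rw [condEqSet_eq_maximizers]
  exact ⟨nonempty_maximizers hne hK husc, isCompact_maximizers hK husc,
    convexPM_maximizers hconv haff, fun herg μ hμ =>
      ergodic_of_isExtremePM_invariantFiber measurable_shiftMap hX.measurableSet hπ.measurable
        hsemi herg (isExtremePM_of_isExtremePM_maximizers haff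
          (fun η hη => eqVal_ne_top hX hshift hφ (hKX hη)) hμ)⟩

end ConditionalEquilibriumStates

/-- Proposition 3.3(ii) / `pro-2.2`(ii): the set of conditional equilibrium
states over `ν` is non-empty, compact and convex; if `ν` is ergodic then its extreme points
are ergodic. -/
theorem weighted_eq_states_stmt_6 {A B : Type}
    [Fintype A] [TopologicalSpace A] [DiscreteTopology A] [MeasurableSpace A] [BorelSpace A]
    [Fintype B] [TopologicalSpace B] [DiscreteTopology B] [MeasurableSpace B] [BorelSpace B]
    (X : Set (ℕ → A)) (Y : Set (ℕ → B)) (hX : IsSubshift X) (hY : IsSubshift Y)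
    (π : A → B) (hπ : blockMap π '' X = Y)
    (φ : List A → ℝ) (hφ : Submult X φ)
    (ν : ProbabilityMeasure (ℕ → B)) (hν : ν ∈ MInv Y) :
    (CondEqSet X π (genPot φ) (ν : Measure (ℕ → B))).Nonempty ∧
    IsCompact (CondEqSet X π (genPot φ) (ν : Measure (ℕ → B))) ∧
    ConvexPM (CondEqSet X π (genPot φ) (ν : Measure (ℕ → B))) ∧
    (Ergodic shiftMap (ν : Measure (ℕ → B)) →
      ∀ μ : ProbabilityMeasure (ℕ → A),
        IsExtremePM (CondEqSet X π (genPot φ) (ν : Measure (ℕ → B))) μ →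
        Ergodic shiftMap (μ : Measure (ℕ → A))) := by
  subst hπ
  exact weighted_eq_states_stmt_6_general hX.2.1.isClosed (Set.mapsTo_iff_image_subset.2 hX.2.2) π
    (subaddPot_genPot hφ) hν
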